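/- arXiv:1102.5427 — 5 statements merged into one kernel-verified Lean document; each statement's English description precedes it below -/
import Mathlib

section
/- If u ∈ C(X) is a continuous function satisfying property (P), then ∫ u dμ ≥ 0 for every f-invariant Borel probability measure μ on X. -/
/-!
The idea is to perturb `u` by a constant `2ε` and to bound the Birkhoff sums of `v = u + 2ε` from
below by a constant independent of the time.

Uniform continuity of `u` gives a radius `δ` at which Birkhoff sums of length `n` vary by at most
`n ε` on Bowen balls, so property (P) provides for each point `y` a time `n ≥ 1` with
`S_n v(y) > 0` (`exists_birk_pos`). The sets `{S_n v > 0}` are open, so by compactness these times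
can be chosen at most some `M`. Cutting an orbit segment into pieces of length at most `M`
with nonnegative sums, plus a remainder of length at most `M`, yields `S_n v ≥ -M K` for all `n`,
where `K` bounds `|v|` (`birk_lower_bound`). Integrating against an invariant `μ` gives
`n ∫ v dμ ≥ -M K` for all `n`, whence `∫ v dμ ≥ 0`, that is `∫ u dμ ≥ -2ε`.
-/

open MeasureTheory Filter Set Topology
open scoped ENNReal

noncomputable section

namespace Multifractal

variable {X : Type*} [MetricSpace X]

/-- The Birkhoff sum `S_n φ(x) = ∑_{k<n} φ(f^k x)`. -/
def birk (f : X → X) (φ : X → ℝ) (n : ℕ) (x : X) : ℝ :=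
  ∑ k ∈ Finset.range n, φ (f^[k] x)

/-- The Bowen ball `B(x,n,δ)`. -/
def bowenBall (f : X → X) (x : X) (n : ℕ) (δ : ℝ) : Set X :=
  {y | ∀ k < n, dist (f^[k] x) (f^[k] y) < δ}

/-- A countable cover of `Z` by Bowen balls of order at least `N` and radius `δ`,
with centres in `Z`; this is the collection `P(Z,N,δ)`. -/
def IsBowenCover (f : X → X) (Z : Set X) (N : ℕ) (δ : ℝ) (E : Set (X × ℕ)) : Prop :=
  E.Countable ∧ (∀ p ∈ E, p.1 ∈ Z ∧ N ≤ p.2) ∧ Z ⊆ ⋃ p ∈ E, bowenBall f p.1 p.2 δ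

/-- The weighted sum `∑_i exp (w (x_i, n_i))` over a cover `E`. -/
def coverSum (E : Set (X × ℕ)) (w : X × ℕ → ℝ) : ℝ≥0∞ :=
  ∑' p : E, ENNReal.ofReal (Real.exp (w ↑p))

/-- The set function `m_P(Z,s,φ,δ) = lim_{N→∞} m_P(Z,s,φ,N,δ)` (the limit in `N` is a
supremum, by monotonicity). -/
def mP (f : X → X) (Z : Set X) (s : ℝ) (φ : X → ℝ) (δ : ℝ) : ℝ≥0∞ :=
  ⨆ N : ℕ, ⨅ (E : Set (X × ℕ)) (_ : IsBowenCover f Z N δ E),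
    coverSum E fun p => -(p.2 : ℝ) * s + birk f φ p.2 p.1

/-- `P_Z(φ,δ) = inf {s | m_P(Z,s,φ,δ) = 0}`, as an extended real. -/
def pressureAt (f : X → X) (Z : Set X) (φ : X → ℝ) (δ : ℝ) : EReal :=
  sInf ((fun s : ℝ => (s : EReal)) '' {s : ℝ | mP f Z s φ δ = 0})

/-- The topological pressure `P_Z(φ) = lim_{δ→0} P_Z(φ,δ)` (the limit is a supremum, by
monotonicity in `δ`). -/
def pressure (f : X → X) (Z : Set X) (φ : X → ℝ) : EReal :=
  ⨆ (δ : ℝ) (_ : 0 < δ), pressureAt f Z φ δ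

/-- Finite topological entropy: `h_top(X) = P_X(0) < ∞`. -/
def FiniteHtop (f : X → X) : Prop := pressure f univ (fun _ => 0) ≠ ⊤

/-- The set function `m_u(Z,s,δ)` used to define the `u`-dimension. -/
def mU (f : X → X) (u : X → ℝ) (Z : Set X) (s : ℝ) (δ : ℝ) : ℝ≥0∞ :=
  ⨆ N : ℕ, ⨅ (E : Set (X × ℕ)) (_ : IsBowenCover f Z N δ E),
    coverSum E fun p => -s * birk f u p.2 p.1

/-- `dim_u(Z,δ) = inf {s | m_u(Z,s,δ) = 0}`. -/
def dimuAt (f : X → X) (u : X → ℝ) (Z : Set X) (δ : ℝ) : EReal :=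
  sInf ((fun s : ℝ => (s : EReal)) '' {s : ℝ | mU f u Z s δ = 0})

/-- The `u`-dimension `dim_u Z = lim_{δ→0} dim_u(Z,δ)`, with `dim_u ∅ = -∞`. -/
def dimu (f : X → X) (u : X → ℝ) (Z : Set X) : EReal :=
  ⨆ (δ : ℝ) (_ : 0 < δ), dimuAt f u Z δ

/-- Property (P): for every `δ>0` there exist covers `E_N ∈ P(X,N,δ)` with
`lim_{N→∞} inf_{(x,n) ∈ E_N} S_n u(x) = +∞`. -/
def PropP (f : X → X) (u : X → ℝ) : Prop :=
  ∀ δ : ℝ, 0 < δ → ∃ E : ℕ → Set (X × ℕ),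
    (∀ N, IsBowenCover f univ N δ (E N)) ∧
    ∀ C : ℝ, ∃ N₀ : ℕ, ∀ N ≥ N₀, ∀ p ∈ E N, C ≤ birk f u p.2 p.1

/-- The ratio level set `K_α = {x | S_nφ(x)/S_nψ(x) → α}`. -/
def Kratio (f : X → X) (φ ψ : X → ℝ) (α : ℝ) : Set X :=
  {x | Tendsto (fun n : ℕ => birk f φ n x / birk f ψ n x) atTop (𝓝 α)}

/-- The Birkhoff average level set `K_α^φ = {x | (1/n) S_nφ(x) → α}`. -/
def Kbirk (f : X → X) (φ : X → ℝ) (α : ℝ) : Set X :=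
  {x | Tendsto (fun n : ℕ => birk f φ n x / n) atTop (𝓝 α)}

/-- The set `X̂` of points with `liminf S_nψ(x) > 0` and `liminf (1/n) S_n u(x) > 0`. -/
def Xhat (f : X → X) (ψ u : X → ℝ) : Set X :=
  {x | 0 < Filter.liminf (fun n : ℕ => ((birk f ψ n x : ℝ) : EReal)) atTop ∧
       0 < Filter.liminf (fun n : ℕ => ((birk f u n x / n : ℝ) : EReal)) atTop}

/-- The set of points where `liminf (1/n) S_n v(x) > 0`. -/
def liminfPosSet (f : X → X) (v : X → ℝ) : Set X :=
  {x | 0 < Filter.liminf (fun n : ℕ => ((birk f v n x / n : ℝ) : EReal)) atTop}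

/-- The potential `q(φ - αψ) - tu`. -/
def potential (φ ψ u : X → ℝ) (α q t : ℝ) : X → ℝ :=
  fun x => q * (φ x - α * ψ x) - t * u x

/-- `T_α(q) = inf {t | P_Z(q(φ-αψ) - tu) ≤ 0}` for the system restricted to `Z`. -/
def TspecOn (f : X → X) (Z : Set X) (φ ψ u : X → ℝ) (α q : ℝ) : EReal :=
  sInf ((fun t : ℝ => (t : EReal)) '' {t : ℝ | pressure f Z (potential φ ψ u α q t) ≤ 0})

/-- The predicted spectrum `S(α) = inf_q T_α(q)` for the system restricted to `Z`. -/
def SspecOn (f : X → X) (Z : Set X) (φ ψ u : X → ℝ) (α : ℝ) : EReal :=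
  ⨅ q : ℝ, TspecOn f Z φ ψ u α q

/-- `T_α(q) = inf {t | P(q(φ-αψ) - tu) ≤ 0}`. -/
def Tspec (f : X → X) (φ ψ u : X → ℝ) (α q : ℝ) : EReal := TspecOn f univ φ ψ u α q

/-- The thermodynamically predicted spectrum `S(α) = inf_q T_α(q)`. -/
def Sspec (f : X → X) (φ ψ u : X → ℝ) (α : ℝ) : EReal := SspecOn f univ φ ψ u α

/-- `T_0(q) = inf{t | P(qφ - tu) ≤ 0}` (the non-mixed case `u = ψ`). -/
def T0fun (f : X → X) (φ u : X → ℝ) (q : ℝ) : EReal :=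
  sInf ((fun t : ℝ => (t : EReal)) ''
    {t : ℝ | pressure f univ (fun x => q * φ x - t * u x) ≤ 0})

/-- `Q = {q | T_0(q) < ∞}`. -/
def Qset (f : X → X) (φ u : X → ℝ) : Set ℝ := {q | T0fun f φ u q < ⊤}

/-- `Ĩ = ⋃_{q ∈ int Q} J(q)`: `α ∈ Ĩ` iff `α` is the slope of a subtangent line to the
convex function `T_0` at some `q` in the interior of `Q`. -/
def Itilde (f : X → X) (φ u : X → ℝ) : Set ℝ :=
  {α | ∃ q ∈ interior (Qset f φ u), ∀ q' : ℝ,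
    T0fun f φ u q + ((α * (q' - q) : ℝ) : EReal) ≤ T0fun f φ u q'}

/-- The approximate level set `G_n(U)`. -/
def Gset (f : X → X) (φ : X → ℝ) (n : ℕ) (U : Set ℝ) : Set X :=
  {x | birk f φ n x / n ∈ U}

/-- `Λ_n^δ(U)`: the minimal cardinality of a set `E` with `B(E,n,δ) ⊇ G_n(U)`. -/
def Lam (f : X → X) (φ : X → ℝ) (n : ℕ) (δ : ℝ) (U : Set ℝ) : ℕ :=
  sInf {m : ℕ | ∃ E : Finset X, E.card = m ∧ Gset f φ n U ⊆ ⋃ x ∈ E, bowenBall f x n δ}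

/-- `(1/n) log m` as an extended real, with value `-∞` when `m = 0`. -/
def elogn (m n : ℕ) : EReal :=
  if m = 0 then (⊥ : EReal) else ((Real.log m / n : ℝ) : EReal)

/-- The lower coarse spectrum. -/
def lFspec (f : X → X) (φ : X → ℝ) (α : ℝ) : EReal :=
  ⨅ (U : Set ℝ) (_ : U ∈ 𝓝 α), ⨆ (δ : ℝ) (_ : 0 < δ),
    Filter.liminf (fun n : ℕ => elogn (Lam f φ n δ U) n) atTop

/-- The upper coarse spectrum. -/
def uFspec (f : X → X) (φ : X → ℝ) (α : ℝ) : EReal :=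
  ⨅ (U : Set ℝ) (_ : U ∈ 𝓝 α), ⨆ (δ : ℝ) (_ : 0 < δ),
    Filter.limsup (fun n : ℕ => elogn (Lam f φ n δ U) n) atTop

/-- Right derivative of a convex function, as the infimum of difference quotients. -/
def Dplus (g : ℝ → ℝ) (q : ℝ) : ℝ :=
  sInf {m : ℝ | ∃ ε : ℝ, 0 < ε ∧ m = (g (q + ε) - g q) / ε}

/-- Left derivative of a convex function, as the supremum of difference quotients. -/
def Dminus (g : ℝ → ℝ) (q : ℝ) : ℝ :=
  sSup {m : ℝ | ∃ ε : ℝ, 0 < ε ∧ m = (g q - g (q - ε)) / ε}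

section Measures

variable [MeasurableSpace X]

/-- The set `M_f(X)` of `f`-invariant Borel probability measures. -/
def invProb (f : X → X) : Set (Measure X) :=
  {μ | IsProbabilityMeasure μ ∧ MeasurePreserving f μ μ}

/-- The set `M_f^e(X)` of ergodic `f`-invariant Borel probability measures. -/
def ergProb (f : X → X) : Set (Measure X) :=
  {μ | IsProbabilityMeasure μ ∧ Ergodic f μ}

/-- A finite measurable partition of `X`. -/
def IsFinPartition {m : ℕ} (P : Fin m → Set X) : Prop :=
  (∀ i, MeasurableSet (P i)) ∧ (∀ i j, i ≠ j → Disjoint (P i) (P j)) ∧ (⋃ i, P i) = univ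

/-- The entropy `H_μ(P) = ∑_i -μ(P_i) log μ(P_i)` of a finite partition. -/
def partEnt (μ : Measure X) {ι : Type*} [Fintype ι] (P : ι → Set X) : ℝ :=
  ∑ i, -((μ (P i)).toReal * Real.log (μ (P i)).toReal)

/-- The dynamical refinement `⋁_{k<n} f^{-k} P` of a partition. -/
def orbitJoin (f : X → X) {m : ℕ} (P : Fin m → Set X) (n : ℕ) :
    (Fin n → Fin m) → Set X :=
  fun w => ⋂ k : Fin n, f^[(k : ℕ)] ⁻¹' P (w k)

/-- The Kolmogorov–Sinai entropy `h_μ(f)`. -/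
def kolSinai (f : X → X) (μ : Measure X) : ℝ :=
  ⨆ (m : ℕ) (P : Fin m → Set X) (_ : IsFinPartition P),
    ⨅ n : ℕ, partEnt μ (orbitJoin f P (n + 1)) / (n + 1)

/-- The `u`-dimension of a measure: `dim_u μ = inf {dim_u Z | μ(Z) = 1}`. -/
def dimuMeas (f : X → X) (u : X → ℝ) (μ : Measure X) : EReal :=
  sInf {d : EReal | ∃ Z : Set X, μ Z = 1 ∧ d = dimu f u Z}

/-- `μ` is a weak Gibbs measure for `φ` with pressure `Pφ`. -/
def WeakGibbs (f : X → X) (μ : Measure X) (φ : X → ℝ) (Pφ : ℝ) : Prop :=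
  ∀ x : X,
    Tendsto (fun δ : ℝ => Filter.liminf (fun n : ℕ =>
        (((-Real.log ((μ (bowenBall f x n δ)).toReal) + birk f φ n x) / n : ℝ) : EReal)) atTop)
      (𝓝[>] (0 : ℝ)) (𝓝 ((Pφ : EReal))) ∧
    Tendsto (fun δ : ℝ => Filter.limsup (fun n : ℕ =>
        (((-Real.log ((μ (bowenBall f x n δ)).toReal) + birk f φ n x) / n : ℝ) : EReal)) atTop)
      (𝓝[>] (0 : ℝ)) (𝓝 ((Pφ : EReal)))

/-- The level set `K_α^{d_μ}` of points with pointwise dimension `α`. -/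
def KdimSet (μ : Measure X) (α : ℝ) : Set X :=
  {x | Tendsto (fun r : ℝ => Real.log ((μ (Metric.ball x r)).toReal) / Real.log r)
      (𝓝[>] (0 : ℝ)) (𝓝 α)}

end Measures

/-- Each orbit has a time at which the Birkhoff sum of `u + 2ε` is positive. That time is
automatically nonzero, since empty sums vanish. -/
lemma exists_birk_pos {X : Type*} [MetricSpace X] [CompactSpace X]
    (f : X → X) (u : X → ℝ) (hu : Continuous u) (hP : PropP f u) (ε : ℝ) (hε : 0 < ε) (y : X) :
    ∃ n, 0 < birk f (fun x => u x + 2 * ε) n y := by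
  obtain ⟨δ, hδ, hδu⟩ :=
    Metric.uniformContinuous_iff.1 (CompactSpace.uniformContinuous_of_continuous hu) ε hε
  obtain ⟨E, hE, hlim⟩ := hP δ hδ
  obtain ⟨N₀, hN₀⟩ := hlim 0
  -- The cover index is taken positive so that the covering Bowen ball has positive order.
  obtain ⟨-, hN, hcov⟩ := hE (N₀ + 1)
  have hy := hcov (mem_univ y)
  simp only [mem_iUnion] at hy
  obtain ⟨p, hp, hyp⟩ := hy
  have h0 : 0 ≤ birk f u p.2 p.1 := hN₀ (N₀ + 1) (by omega) p hp
  have hn : N₀ + 1 ≤ p.2 := (hN p hp).2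
  refine ⟨p.2, h0.trans_lt ?_⟩
  refine Finset.sum_lt_sum_of_nonempty ⟨0, Finset.mem_range.2 (by omega)⟩ fun k hk => ?_
  have h := hδu (hyp k (Finset.mem_range.1 hk))
  rw [Real.dist_eq] at h
  have := (abs_lt.1 h).2
  linarith

/-- If every orbit has a nonnegative Birkhoff sum at some positive time at most `M`, then all
Birkhoff sums of a function bounded below by `-K` are at least `-M K`. -/
lemma birk_lower_bound {X : Type*} [MetricSpace X] (f : X → X) (v : X → ℝ) (K : ℝ) (hK0 : 0 ≤ K)
    (hK : ∀ x, -K ≤ v x) (M : ℕ) (hM : ∀ x, ∃ m, 0 < m ∧ m ≤ M ∧ 0 ≤ birk f v m x) (n : ℕ) :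
    ∀ x, -(M * K) ≤ birk f v n x := by
  induction n using Nat.strong_induction_on with
  | _ n ih =>
    intro x
    by_cases hn : n ≤ M
    · have h1 : ∑ _k ∈ Finset.range n, (-K) ≤ birk f v n x :=
        Finset.sum_le_sum fun k _ => hK _
      have h2 : (n : ℝ) * K ≤ M * K := by gcongr
      simp only [Finset.sum_const, Finset.card_range, nsmul_eq_mul] at h1
      linarith
    · obtain ⟨m, hm0, hmM, hm⟩ := hM x
      obtain ⟨l, rfl⟩ : ∃ l, n = m + l := ⟨n - m, by omega⟩
      have h1 : birk f v (m + l) x = birk f v m x + birk f v l (f^[m] x) :=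
        birkhoffSum_add f v m l x
      have h2 := ih l (by omega) (f^[m] x)
      linarith

lemma continuous_birk {X : Type*} [MetricSpace X] (f : X → X) (hf : Continuous f)
    (v : X → ℝ) (hv : Continuous v) (n : ℕ) : Continuous (birk f v n) :=
  continuous_finsetSum _ fun k _ => hv.comp (hf.iterate k)

lemma integrable_of_cont {X : Type*} [MetricSpace X] [CompactSpace X]
    [MeasurableSpace X] [BorelSpace X] (μ : Measure X) [IsProbabilityMeasure μ]
    (v : X → ℝ) (hv : Continuous v) : Integrable v μ :=
  hv.integrable_of_hasCompactSupport (HasCompactSupport.of_compactSpace v)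

lemma integral_birk {X : Type*} [MetricSpace X] [CompactSpace X]
    [MeasurableSpace X] [BorelSpace X] (f : X → X) (hf : Continuous f)
    (μ : Measure X) [IsProbabilityMeasure μ] (hμ : MeasurePreserving f μ μ)
    (v : X → ℝ) (hv : Continuous v) (n : ℕ) :
    ∫ x, birk f v n x ∂μ = n * ∫ x, v x ∂μ := by
  have hk : ∀ k, ∫ x, v (f^[k] x) ∂μ = ∫ x, v x ∂μ := fun k => by
    have hm := hμ.iterate k
    conv_rhs => rw [← hm.map_eq]
    exact (integral_map hm.measurable.aemeasurable hv.aestronglyMeasurable).symm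
  unfold birk
  have hi : ∀ k ∈ Finset.range n, Integrable (fun x => v (f^[k] x)) μ := fun k _ =>
    integrable_of_cont μ _ (hv.comp (hf.iterate k))
  rw [integral_finsetSum _ hi]
  simp [hk]

/-- Proposition: `u` with property (P) has nonnegative integral.
If `u ∈ C(X)` satisfies property (P), then `∫ u dμ ≥ 0` for every `f`-invariant
Borel probability measure `μ` on `X`. -/
theorem propP_integral_nonneg {X : Type*} [MetricSpace X] [CompactSpace X]
    [MeasurableSpace X] [BorelSpace X]
    (f : X → X) (hf : Continuous f) (hfin : FiniteHtop f)
    (u : X → ℝ) (hu : Continuous u) (hP : PropP f u)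
    (μ : Measure X) [IsProbabilityMeasure μ] (hμ : MeasurePreserving f μ μ) :
    0 ≤ ∫ x, u x ∂μ := by
  by_contra! hneg
  -- With this `ε` the integral of `u + 2ε` is half that of `u`, so it is still negative.
  obtain ⟨ε, hε, hεu⟩ : ∃ ε > 0, ∫ x, u x ∂μ + 2 * ε < 0 :=
    ⟨-(∫ x, u x ∂μ) / 4, by linarith, by linarith⟩
  set v : X → ℝ := fun x => u x + 2 * ε with hv_def
  have hv : Continuous v := by fun_prop
  obtain ⟨t, ht⟩ := isCompact_univ.elim_finite_subcover (fun n => {y | 0 < birk f v n y})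
    (fun n => isOpen_lt continuous_const (continuous_birk f hf v hv n))
    (fun y _ => mem_iUnion.2 (exists_birk_pos f u hu hP ε hε y))
  obtain ⟨K, hK⟩ := isCompact_univ.exists_bound_of_continuousOn hv.continuousOn
  have hM : ∀ x, ∃ m, 0 < m ∧ m ≤ t.sup id ∧ 0 ≤ birk f v m x := fun x => by
    have hx := ht (mem_univ x)
    simp only [mem_iUnion] at hx
    obtain ⟨m, hmt, hm⟩ := hx
    have hm' : 0 < birk f v m x := hm
    refine ⟨m, Nat.pos_of_ne_zero ?_, Finset.le_sup (f := id) hmt, hm'.le⟩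
    rintro rfl
    simp [birk] at hm'
  have hlow := birk_lower_bound f v |K| (abs_nonneg K)
    (fun x => neg_le_of_abs_le ((hK x (mem_univ x)).trans (le_abs_self K))) _ hM
  have hint : ∀ n : ℕ, -((t.sup id : ℕ) * |K|) ≤ n * ∫ x, v x ∂μ := fun n => by
    rw [← integral_birk f hf μ hμ v hv n]
    have := integral_mono (μ := μ) (integrable_const _)
      (integrable_of_cont μ _ (continuous_birk f hf v hv n)) (hlow n)
    simpa using this
  have hvint : ∫ x, v x ∂μ = ∫ x, u x ∂μ + 2 * ε := by
    rw [hv_def, integral_add (integrable_of_cont μ u hu) (integrable_const _)]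
    simp
  rw [← hvint] at hεu
  obtain ⟨n, hn⟩ := exists_nat_gt (((t.sup id : ℕ) * |K|) / -(∫ x, v x ∂μ))
  rw [div_lt_iff₀ (by linarith)] at hn
  have := hint n
  linarith

end Multifractal
end
end

section
/- Let u ∈ C(X) satisfy property (P), and suppose Z ⊆ X has the property that liminf_{n→∞} (1/n) S_n u(x) > 0 for every x ∈ Z. Then dim_u Z = inf{ t ∈ ℝ : P_Z(−tu) ≤ 0 } (Bowen's equation for u-dimension). -/
/-! Split `Z` into the pieces `Z_m` of those `x ∈ Z` with `S_n u(x) ≥ n/(m+1)` for all `n ≥ m`;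
the assumption on `liminf (1/n) S_n u` says that these exhaust `Z`.  On `Z_m` the quantities `n`
and `S_n u` are comparable, so an error `n r` in an exponent, with `r` small, can be absorbed
either by changing the exponent `s` in `exp (-s S_n u)` slightly, or by the factor `exp (-n η)` in
the definition of pressure.

Both `dim_u` and the pressure only depend on which weights `w` make the critical sums
`∑ exp (w (x_i, n_i))` over fine covers arbitrarily small (`NullWeight`).  Three facts about this
notion carry the proof.  A cover of `Z` can be thinned out to a cover of `Z_m` and recentred in
`Z_m`, at the cost of doubling the radius (`NullWeight.transfer`), and by uniform continuity of `u`
the recentring changes `S_n u` by at most `n r` (`exists_birk_close`).  Finally, null weights for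
all the `Z_m` are null for their union `Z` (`NullWeight.iUnion`).

If `P_Z(-tu) ≤ 0` and `s > t`, then `-s S_n u` is null on each `Z_m`, hence on `Z`, so
`dim_u Z ≤ s`.  Conversely, if `s > dim_u Z` then `-n η - s S_n u` is null on each `Z_m` for every
`η > 0`, hence on `Z`, so `P_Z(-su) ≤ 0`. -/

open MeasureTheory Filter Set Topology
open scoped ENNReal

noncomputable section

namespace Multifractal

variable {X : Type*} [MetricSpace X]

/-- The weight `w` is null on `Z` at scale `δ`: there are covers of `Z` by Bowen balls of radius
`δ` and arbitrarily large order whose sums `∑ exp (w (x_i, n_i))` are arbitrarily small. -/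
def NullWeight (f : X → X) (Z : Set X) (δ : ℝ) (w : X × ℕ → ℝ) : Prop :=
  ∀ N : ℕ, ∀ ε : ℝ≥0∞, 0 < ε → ∃ E, IsBowenCover f Z N δ E ∧ coverSum E w ≤ ε

lemma nullWeight_iff (f : X → X) (Z : Set X) (δ : ℝ) (w : X × ℕ → ℝ) :
    (⨆ N : ℕ, ⨅ (E : Set (X × ℕ)) (_ : IsBowenCover f Z N δ E), coverSum E w) = 0 ↔
      NullWeight f Z δ w := by
  simp only [ENNReal.iSup_eq_zero]
  refine forall_congr' fun N => ⟨fun h ε hε => ?_, fun h => ?_⟩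
  · rw [← h] at hε
    simp only [iInf_lt_iff] at hε
    obtain ⟨E, hE, hlt⟩ := hε
    exact ⟨E, hE, hlt.le⟩
  · refine nonpos_iff_eq_zero.1 (le_of_forall_gt_imp_ge_of_dense fun ε hε => ?_)
    obtain ⟨E, hE, hle⟩ := h ε hε
    exact (iInf₂_le E hE).trans hle

lemma NullWeight.mono_radius {f : X → X} {Z : Set X} {δ δ' : ℝ} {w : X × ℕ → ℝ}
    (h : NullWeight f Z δ w) (hδ : δ ≤ δ') : NullWeight f Z δ' w := by
  intro N ε hε
  obtain ⟨E, ⟨hc, hE, hcov⟩, hle⟩ := h N ε hε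
  refine ⟨E, ⟨hc, hE, hcov.trans ?_⟩, hle⟩
  exact iUnion₂_mono fun p _ y hy k hk => (hy k hk).trans_le hδ

/-- Restriction to a subset: balls meeting `Z'` are recentred at a point of `Z'`, which doubles
the radius. -/
lemma NullWeight.transfer {f : X → X} {Z Z' : Set X} {δ : ℝ} {w w' : X × ℕ → ℝ}
    (h : NullWeight f Z δ w) (hZ : Z' ⊆ Z) (N₀ : ℕ)
    (hw : ∀ n ≥ N₀, ∀ x, ∀ y ∈ Z', y ∈ bowenBall f x n δ → w' (y, n) ≤ w (x, n)) :
    NullWeight f Z' (2 * δ) w' := by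
  intro N ε hε
  obtain ⟨E, ⟨hc, hE, hcov⟩, hle⟩ := h (max N N₀) ε hε
  let D : Set (X × ℕ) := {p ∈ E | ∃ y ∈ Z', y ∈ bowenBall f p.1 p.2 δ}
  have hD : ∀ p : D, ∃ y ∈ Z', y ∈ bowenBall f p.1.1 p.1.2 δ := fun p => p.2.2
  choose c hcZ hcB using hD
  have hDE : D ⊆ E := fun p hp => hp.1
  have hN : ∀ p : D, max N N₀ ≤ p.1.2 := fun p => (hE _ (hDE p.2)).2
  let g : D → X × ℕ := fun p => (c p, p.1.2)
  have hDc : Countable D := (hc.mono hDE).to_subtype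
  refine ⟨range g, ⟨countable_range g, ?_, ?_⟩, ?_⟩
  · rintro _ ⟨p, rfl⟩
    exact ⟨hcZ p, (le_max_left _ _).trans (hN p)⟩
  · intro y hy
    obtain ⟨p, hp, hyp⟩ := mem_iUnion₂.1 (hcov (hZ hy))
    let q : D := ⟨p, hp, y, hy, hyp⟩
    refine mem_iUnion₂.2 ⟨g q, mem_range_self q, fun k hk => ?_⟩
    have h1 := hcB q k hk
    have h2 := hyp k hk
    have h3 := dist_triangle_left (f^[k] (c q)) (f^[k] y) (f^[k] p.1)
    change dist (f^[k] p.1) (f^[k] (c q)) < δ at h1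
    change dist (f^[k] (c q)) (f^[k] y) < 2 * δ
    linarith
  · calc coverSum (range g) w'
        ≤ ∑' p : D, ENNReal.ofReal (Real.exp (w' (g p))) :=
          ENNReal.tsum_le_tsum_comp_of_surjective (rangeFactorization_surjective (f := g))
            (fun q : range g => ENNReal.ofReal (Real.exp (w' q)))
      _ ≤ ∑' p : D, ENNReal.ofReal (Real.exp (w p)) := by
          refine ENNReal.tsum_le_tsum fun p =>
            ENNReal.ofReal_le_ofReal (Real.exp_le_exp.2 ?_)
          exact hw _ ((le_max_right _ _).trans (hN p)) _ _ (hcZ p) (hcB p)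
      _ ≤ coverSum E w := 
          ENNReal.tsum_mono_subtype (fun p => ENNReal.ofReal (Real.exp (w p))) hDE
      _ ≤ ε := hle

lemma NullWeight.iUnion {f : X → X} {Z : Set X} {A : ℕ → Set X} {δ : ℝ} {w : X × ℕ → ℝ}
    (hA : ∀ m, A m ⊆ Z) (hZ : Z ⊆ ⋃ m, A m) (h : ∀ m, NullWeight f (A m) δ w) :
    NullWeight f Z δ w := by
  intro N ε hε
  obtain ⟨e, he, hsum⟩ := ENNReal.exists_pos_sum_of_countable' hε.ne' ℕ
  choose E hE hle using fun m => h m N (e m) (he m)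
  refine ⟨⋃ m, E m, ⟨countable_iUnion fun m => (hE m).1, ?_, ?_⟩, ?_⟩
  · intro p hp
    obtain ⟨m, hm⟩ := mem_iUnion.1 hp
    exact ⟨hA m ((hE m).2.1 p hm).1, ((hE m).2.1 p hm).2⟩
  · intro y hy
    obtain ⟨m, hm⟩ := mem_iUnion.1 (hZ hy)
    obtain ⟨p, hp, hyp⟩ := mem_iUnion₂.1 ((hE m).2.2 hm)
    exact mem_iUnion₂.2 ⟨p, mem_iUnion.2 ⟨m, hp⟩, hyp⟩
  · exact (ENNReal.tsum_iUnion_le_tsum (fun p => ENNReal.ofReal (Real.exp (w p))) E).trans ((ENNReal.tsum_le_tsum hle).trans hsum.le)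

/-- Bounded distortion: on small Bowen balls of order `n`, the sum `S_n u` varies by at most
`n r`. -/
lemma exists_birk_close [CompactSpace X] (f : X → X) {u : X → ℝ} (hu : Continuous u) {r : ℝ}
    (hr : 0 < r) : ∃ δ > 0, ∀ n x y, y ∈ bowenBall f x n δ →
      |birk f u n x - birk f u n y| ≤ n * r := by
  obtain ⟨δ, hδ, h⟩ := Metric.uniformContinuous_iff.1
    (CompactSpace.uniformContinuous_of_continuous hu) r hr
  refine ⟨δ, hδ, fun n x y hy => ?_⟩
  rw [birk, birk, ← Finset.sum_sub_distrib]
  refine (Finset.abs_sum_le_sum_abs _ _).trans ?_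
  refine (Finset.sum_le_card_nsmul _ _ r fun k hk => ?_).trans (by simp)
  exact (h (hy k (Finset.mem_range.1 hk))).le

lemma birk_neg_mul (f : X → X) (u : X → ℝ) (t : ℝ) (n : ℕ) (x : X) :
    birk f (fun x => -t * u x) n x = -t * birk f u n x := by
  simp only [birk, Finset.mul_sum]

/-- The part of `Z` on which `S_n u ≥ n/(m+1)` holds for all `n ≥ m`. -/
def posPiece (f : X → X) (u : X → ℝ) (Z : Set X) (m : ℕ) : Set X :=
  {x ∈ Z | ∀ n ≥ m, (n : ℝ) / (m + 1) ≤ birk f u n x}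

lemma subset_iUnion_posPiece {f : X → X} {u : X → ℝ} {Z : Set X}
    (hZ : ∀ x ∈ Z,
      0 < Filter.liminf (fun n : ℕ => ((birk f u n x / n : ℝ) : EReal)) atTop) :
    Z ⊆ ⋃ m, posPiece f u Z m := by
  intro x hx
  obtain ⟨c, hc0, hc⟩ := EReal.lt_iff_exists_real_btwn.1 (hZ x hx)
  have hc0 : 0 < c := by exact_mod_cast hc0
  obtain ⟨M, hM⟩ := eventually_atTop.1 (eventually_lt_of_lt_liminf hc)
  obtain ⟨K, hK⟩ := exists_nat_one_div_lt hc0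
  refine mem_iUnion.2 ⟨max M K, hx, fun n hn => ?_⟩
  have h1 : c < birk f u n x / n := by exact_mod_cast hM n ((le_max_left _ _).trans hn)
  rcases Nat.eq_zero_or_pos n with rfl | hn0
  · simp [birk]
  have hn0 : (0 : ℝ) < n := by exact_mod_cast hn0
  have h2 : (1 : ℝ) / ((max M K : ℕ) + 1) ≤ 1 / (K + 1) := by
    gcongr
    exact le_max_right _ _
  rw [lt_div_iff₀ hn0] at h1
  calc (n : ℝ) / ((max M K : ℕ) + 1) = 1 / ((max M K : ℕ) + 1) * n := by ring
    _ ≤ c * n := by gcongr; linarith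
    _ ≤ _ := h1.le

/-- If `P_Z(-tu) ≤ 0` and `t < s`, then the sums defining `dim_u Z` at exponent `s` are null. -/
lemma nullWeight_of_pressure_le [CompactSpace X] {f : X → X} {u : X → ℝ} (hu : Continuous u)
    {Z : Set X} (hZ : Z ⊆ ⋃ m, posPiece f u Z m) {t s : ℝ} (hts : t < s)
    (ht : pressure f Z (fun x => -t * u x) ≤ 0) {δ : ℝ} (hδ : 0 < δ) :
    NullWeight f Z δ (fun p => -s * birk f u p.2 p.1) := by
  refine NullWeight.iUnion (fun m x hx => hx.1) hZ fun m => ?_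
  -- `r` serves both as the pressure slack and as the distortion: `r + |t| r = (s - t)/(m+1)`.
  set r : ℝ := (s - t) / (m + 1) / (1 + |t|) with hr
  have hr0 : 0 < r := by have := sub_pos.2 hts; positivity
  have hrt : r + |t| * r = (s - t) / (m + 1) := by
    rw [hr]; field_simp
  obtain ⟨δ₁, hδ₁, hclose⟩ := exists_birk_close f hu hr0
  set δ₀ := min (δ / 2) δ₁
  have hδ₀ : 0 < δ₀ := by positivity
  have hlt : pressureAt f Z (fun x => -t * u x) δ₀ < (r : EReal) :=
    ((le_iSup₂ (f := fun (δ : ℝ) (_ : 0 < δ) => pressureAt f Z (fun x => -t * u x) δ)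
      δ₀ hδ₀).trans ht).trans_lt (by exact_mod_cast hr0)
  obtain ⟨_, ⟨η, hη, rfl⟩, hηr⟩ := sInf_lt_iff.1 hlt
  have hηr : η < r := EReal.coe_lt_coe_iff.1 hηr
  have hnull := (nullWeight_iff _ _ _ _).1 hη
  refine (hnull.transfer (fun x hx => hx.1) m ?_).mono_radius
    (by linarith [min_le_left (δ / 2) δ₁] : 2 * δ₀ ≤ δ)
  intro n hn x y hy hyx
  have h1 := hclose n x y fun k hk => (hyx k hk).trans_le (min_le_right _ _)
  have h2 := hy.2 n hn
  simp only [birk_neg_mul]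
  have h3 : t * (birk f u n x - birk f u n y) ≤ |t| * (n * r) :=
    (le_abs_self _).trans (by rw [abs_mul]; gcongr)
  have h4 : (s - t) * (n / (m + 1)) ≤ (s - t) * birk f u n y :=
    mul_le_mul_of_nonneg_left h2 (sub_nonneg.2 hts.le)
  have h5 : (s - t) * ((n : ℝ) / (m + 1)) = n * (r + |t| * r) := by rw [hrt]; ring
  have h6 : (n : ℝ) * η ≤ n * r := by gcongr
  linarith

/-- If `dim_u Z < s`, then the sums defining `P_Z(-su)` are null at every `η > 0`. -/
lemma nullWeight_of_dimu_lt [CompactSpace X] {f : X → X} {u : X → ℝ} (hu : Continuous u)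
    {Z : Set X} (hZ : Z ⊆ ⋃ m, posPiece f u Z m) {s η : ℝ} (hη : 0 < η)
    (hs : dimu f u Z < s) {δ : ℝ} (hδ : 0 < δ) :
    NullWeight f Z δ (fun p => -(p.2 : ℝ) * η + birk f (fun x => -s * u x) p.2 p.1) := by
  refine NullWeight.iUnion (fun m x hx => hx.1) hZ fun m => ?_
  -- `r ≤ 1/(m+1)` keeps `S_n u` nonnegative at the old centres; `|s| r ≤ η` pays for recentring.
  set r : ℝ := min (1 / (m + 1)) (η / (1 + |s|)) with hr
  have hr0 : 0 < r := by positivity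
  have hsr : |s| * r ≤ η := by
    have h1 : r * (1 + |s|) ≤ η := (le_div_iff₀ (by positivity)).1 (min_le_right _ _)
    linarith
  obtain ⟨δ₁, hδ₁, hclose⟩ := exists_birk_close f hu hr0
  set δ₀ := min (δ / 2) δ₁
  have hδ₀ : 0 < δ₀ := by positivity
  have hlt : dimuAt f u Z δ₀ < (s : EReal) :=
    (le_iSup₂ (f := fun (δ : ℝ) (_ : 0 < δ) => dimuAt f u Z δ) δ₀ hδ₀).trans_lt hs
  obtain ⟨_, ⟨s', hs', rfl⟩, hss⟩ := sInf_lt_iff.1 hlt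
  have hss : s' < s := EReal.coe_lt_coe_iff.1 hss
  have hnull := (nullWeight_iff _ _ _ _).1 hs'
  refine (hnull.transfer (fun x hx => hx.1) m ?_).mono_radius
    (by linarith [min_le_left (δ / 2) δ₁] : 2 * δ₀ ≤ δ)
  intro n hn x y hy hyx
  have h1 := hclose n x y fun k hk => (hyx k hk).trans_le (min_le_right _ _)
  have h2 := hy.2 n hn
  simp only [birk_neg_mul]
  have h3 : s * (birk f u n x - birk f u n y) ≤ |s| * (n * r) :=
    (le_abs_self _).trans (by rw [abs_mul]; gcongr)
  have h4 : (n : ℝ) * r ≤ n / (m + 1) := by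
    rw [div_eq_mul_one_div]
    gcongr
    exact min_le_left _ _
  have h5 : 0 ≤ birk f u n x := by linarith [(abs_le.1 h1).1]
  have h6 : s' * birk f u n x ≤ s * birk f u n x := mul_le_mul_of_nonneg_right hss.le h5
  have h7 : (n : ℝ) * (|s| * r) ≤ n * η := by gcongr
  linarith

/-- Bowen's equation for `u`-dimension.
Let `u ∈ C(X)` satisfy property (P), and suppose `Z ⊆ X` has the property that
`liminf_{n→∞} (1/n) S_n u(x) > 0` for every `x ∈ Z`.  Then
`dim_u Z = inf { t ∈ ℝ | P_Z(-tu) ≤ 0 }`. -/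
theorem bowen_equation {X : Type*} [MetricSpace X] [CompactSpace X]
    (f : X → X) (hf : Continuous f) (hfin : FiniteHtop f)
    (u : X → ℝ) (hu : Continuous u) (hP : PropP f u)
    (Z : Set X)
    (hZ : ∀ x ∈ Z,
      0 < Filter.liminf (fun n : ℕ => ((birk f u n x / n : ℝ) : EReal)) atTop) :
    dimu f u Z
      = sInf ((fun t : ℝ => (t : EReal)) ''
          {t : ℝ | pressure f Z (fun x => -t * u x) ≤ 0}) := by
  have hcov := subset_iUnion_posPiece hZ
  apply le_antisymm
  · refine le_sInf ?_
    rintro _ ⟨t, ht, rfl⟩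
    refine EReal.le_of_forall_lt_iff_le.1 fun s hs => iSup₂_le fun δ hδ => sInf_le ⟨s, ?_, rfl⟩
    exact (nullWeight_iff _ _ _ _).2
      (nullWeight_of_pressure_le hu hcov (EReal.coe_lt_coe_iff.1 hs) ht hδ)
  · refine EReal.le_of_forall_lt_iff_le.1 fun s hs => sInf_le ⟨s, ?_, rfl⟩
    change pressure f Z (fun x => -s * u x) ≤ 0
    refine iSup₂_le fun δ hδ => ?_
    refine EReal.le_of_forall_lt_iff_le.1 fun η hη => sInf_le ⟨η, ?_, rfl⟩
    exact (nullWeight_iff _ _ _ _).2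
      (nullWeight_of_dimu_lt hu hcov (by exact_mod_cast hη) hs hδ)
end Multifractal
end
end

section
/- Let u ∈ C(X) satisfy property (P). For every ergodic f-invariant Borel probability measure μ with ∫ u dμ > 0, the u-dimension of μ is dim_u μ = h_μ(f) / ∫ u dμ. -/
/-! The lower bound `h ≤ dim_u μ · ∫ u` is a mass distribution argument, the upper bound a covering
argument.  Finite partitions are encoded by index maps `ι : X → Fin m`, their dynamical refinements
by the distribution of the words `(ι x, ι (f x), …, ι (f^{n-1} x))`, and the entropy rate of `ι` is
the infimum of `H_n / n`, with `H_n` the entropy of the `n`-words.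

Two halves of the Shannon–McMillan–Breiman theorem carry the proof.
* `exists_information`: there is a bounded `ξ` with `∫ ξ` at least the entropy rate up to `ε`, namely
  the truncated information of the first letter given the whole future, such that
  `∫_{[w]} exp (S_n ξ) ≤ 1` for every cylinder `[w]`.  By Birkhoff's theorem typical points in a
  cylinder of length `n` therefore form a set of measure at most about `exp (-n h)`.
* `exists_typical_words`: typical points have at most about `exp (n h)` words of length `n`.
  This comes from comparing `μ` with a Markov chain of long memory.

Both rest on the two halves `ae_birk_ge`, `ae_birk_le` of Birkhoff's ergodic theorem.

Lower bound (`exists_bowenBall_bound`, `exists_mU_ne_zero`).  By Lusin's theorem nearby points have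
the same letter off a set of small measure, so the typical points of a Bowen ball `B(x, n, δ)` have
`n`-words in a small Hamming ball, which is the union of few cylinders.  Hence `μ (B(x, n, δ) ∩ G)`
is at most `exp (-s S_n u(x))` whenever `s ∫ u < h`, on a set `G` of positive measure, and no cover
of a set of full measure can have small weighted sum.  The same bound for `u = 1` gives
`h ≤ h_top < ∞` (`exists_wordRate_le`), so that the supremum `kolSinai` is finite.

Upper bound (`exists_full_measure_set`, `dimuMeas_le`).  For a partition into pieces of diameter less
than `δ`, one centre for each typical word gives a cover by about `exp (n h)` Bowen balls of order
`n`, each of weight about `exp (-n s ∫ u)`, and the weighted sum tends to `0` if `s ∫ u > h`.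
-/

open MeasureTheory Filter Set Topology
open scoped ENNReal

noncomputable section

namespace Multifractal

variable {X : Type*} [MetricSpace X]

set_option linter.unusedSectionVars false

/-! ### Birkhoff averages -/

lemma birk_zero (f : X → X) (φ : X → ℝ) (x : X) : birk f φ 0 x = 0 := by
  simp [birk]

lemma birk_succ (f : X → X) (φ : X → ℝ) (n : ℕ) (x : X) :
    birk f φ (n + 1) x = φ x + birk f φ n (f x) := by
  simp only [birk]
  rw [Finset.sum_range_succ']
  simp [Function.iterate_succ_apply, add_comm]

lemma birk_neg (f : X → X) (φ : X → ℝ) (n : ℕ) (x : X) :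
    birk f (fun y => -φ y) n x = -birk f φ n x := by
  simp [birk]

lemma birk_sub_const (f : X → X) (φ : X → ℝ) (c : ℝ) (n : ℕ) (x : X) :
    birk f (fun y => φ y - c) n x = birk f φ n x - n * c := by
  simp [birk, Finset.sum_sub_distrib]

lemma measurable_birk [MeasurableSpace X] {f : X → X} (hf : Measurable f) {φ : X → ℝ}
    (hφ : Measurable φ) (n : ℕ) : Measurable (birk f φ n) := by
  unfold birk
  exact Finset.measurable_sum _ fun k _ => hφ.comp (hf.iterate k)

/-- The running minimum `min_{0 ≤ k ≤ n} S_k ψ(x)` (with `S_0 ψ = 0`), in the recursive form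
which makes its behaviour under `f` visible. -/
def runMin (f : X → X) (ψ : X → ℝ) : ℕ → X → ℝ
  | 0, _ => 0
  | n + 1, x => min 0 (ψ x + runMin f ψ n (f x))

lemma runMin_nonpos (f : X → X) (ψ : X → ℝ) (n : ℕ) (x : X) : runMin f ψ n x ≤ 0 := by
  cases n with
  | zero => exact le_rfl
  | succ n => exact min_le_left _ _

lemma runMin_antitone (f : X → X) (ψ : X → ℝ) (n : ℕ) :
    ∀ x, runMin f ψ (n + 1) x ≤ runMin f ψ n x := by
  induction n with
  | zero => intro x; exact runMin_nonpos f ψ 1 x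
  | succ n ih =>
    intro x
    exact min_le_min le_rfl (by linarith [ih (f x)])

lemma runMin_le_birk (f : X → X) (ψ : X → ℝ) (n : ℕ) :
    ∀ x, runMin f ψ n x ≤ birk f ψ n x := by
  induction n with
  | zero => intro x; simp [runMin, birk_zero]
  | succ n ih =>
    intro x
    rw [birk_succ]
    exact (min_le_right _ _).trans (by linarith [ih (f x)])

lemma abs_runMin_le (f : X → X) {ψ : X → ℝ} {C : ℝ} (hC : ∀ x, |ψ x| ≤ C) (n : ℕ) :
    ∀ x, |runMin f ψ n x| ≤ n * C := by
  induction n with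
  | zero => intro x; simp [runMin]
  | succ n ih =>
    intro x
    have h1 := abs_le.1 (ih (f x))
    have h2 := abs_le.1 (hC x)
    have h3 := runMin_nonpos f ψ (n + 1) x
    rw [abs_of_nonpos h3]
    have : -((n + 1 : ℕ) * C) ≤ runMin f ψ (n + 1) x := by
      push_cast
      refine le_min ?_ ?_
      · have := (abs_nonneg _).trans (hC x)
        have : 0 ≤ ((n : ℝ) + 1) * C := by positivity
        linarith
      · nlinarith
    linarith

lemma measurable_runMin [MeasurableSpace X] {f : X → X} (hf : Measurable f) {ψ : X → ℝ}
    (hψ : Measurable ψ) (n : ℕ) : Measurable (runMin f ψ n) := by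
  induction n with
  | zero => exact measurable_const
  | succ n ih => exact measurable_const.min (hψ.add (ih.comp hf))

lemma integrable_of_bdd [MeasurableSpace X] {μ : Measure X} [IsFiniteMeasure μ] {φ : X → ℝ}
    (hφ : Measurable φ) {C : ℝ} (hC : ∀ x, |φ x| ≤ C) : Integrable φ μ :=
  Integrable.of_bound hφ.aestronglyMeasurable C (Eventually.of_forall hC)

lemma integral_comp_mp [MeasurableSpace X] {μ : Measure X} {f : X → X}
    (hf : MeasurePreserving f μ μ) {φ : X → ℝ} (hφ : Measurable φ) :
    ∫ x, φ (f x) ∂μ = ∫ x, φ x ∂μ := by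
  conv_rhs => rw [← hf.map_eq]
  rw [integral_map hf.measurable.aemeasurable hφ.aestronglyMeasurable]

/-- If `∫ ψ > 0` then almost every orbit has Birkhoff sums bounded below.  Otherwise, by
ergodicity, the running minima `m_n` tend to `-∞` almost everywhere, so that
`m_{n+1} - m_n ∘ f = min (-m_n ∘ f) ψ` converges to `ψ`, while its integral is
`∫ (m_{n+1} - m_n) ≤ 0`. -/
lemma ae_birk_bddBelow [MeasurableSpace X] {μ : Measure X} [IsProbabilityMeasure μ]
    {f : X → X} (herg : Ergodic f μ) {ψ : X → ℝ} (hψ : Measurable ψ) {C : ℝ}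
    (hC : ∀ x, |ψ x| ≤ C) (hpos : 0 < ∫ x, ψ x ∂μ) :
    ∀ᵐ x ∂μ, ∃ K : ℕ, ∀ n, -(K : ℝ) ≤ birk f ψ n x := by
  have hfm : Measurable f := herg.measurable
  set A : Set X := {x | ∃ K : ℕ, ∀ n, -(K : ℝ) ≤ birk f ψ n x} with hA
  have hAm : MeasurableSet A := by
    have : A = ⋃ K : ℕ, ⋂ n : ℕ, {x | -(K : ℝ) ≤ birk f ψ n x} := by
      ext x; simp [hA]
    rw [this]
    exact MeasurableSet.iUnion fun K => MeasurableSet.iInter fun n =>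
      measurableSet_le measurable_const (measurable_birk hfm hψ n)
  have hinv : f ⁻¹' A = A := by
    ext x
    simp only [hA, mem_preimage, mem_ofPred_eq]
    have h2 := abs_le.1 (hC x)
    constructor
    · rintro ⟨K, hK⟩
      obtain ⟨L, hL⟩ := exists_nat_ge (K + C)
      refine ⟨L, fun n => ?_⟩
      cases n with
      | zero => rw [birk_zero]; simp
      | succ n => rw [birk_succ]; linarith [hK n]
    · rintro ⟨K, hK⟩
      obtain ⟨L, hL⟩ := exists_nat_ge (K + C)
      refine ⟨L, fun n => ?_⟩
      have := hK (n + 1)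
      rw [birk_succ] at this
      linarith
  rcases herg.toPreErgodic.measure_self_or_compl_eq_zero hAm hinv with h0 | h0
  swap
  · exact h0
  exfalso
  have hae : ∀ᵐ x ∂μ, x ∉ A := measure_eq_zero_iff_ae_notMem.1 h0
  have haef : ∀ᵐ x ∂μ, f x ∉ A := herg.toMeasurePreserving.quasiMeasurePreserving.ae hae
  have hid : ∀ n x, runMin f ψ (n + 1) x - runMin f ψ n (f x)
      = min (-runMin f ψ n (f x)) (ψ x) := by
    intro n x
    simp only [runMin]
    rw [← min_sub_sub_right]
    congr 1 <;> ring
  have hint : ∀ n, Integrable (runMin f ψ n) μ := fun n =>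
    integrable_of_bdd (measurable_runMin hfm hψ n) (abs_runMin_le f hC n)
  have hle : ∀ n, ∫ x, min (-runMin f ψ n (f x)) (ψ x) ∂μ ≤ 0 := by
    intro n
    simp_rw [← hid]
    have hi2 : Integrable (fun x => runMin f ψ n (f x)) μ :=
      integrable_of_bdd ((measurable_runMin hfm hψ n).comp hfm)
        (fun x => abs_runMin_le f hC n (f x))
    rw [integral_sub (hint _) hi2,
      integral_comp_mp herg.toMeasurePreserving (measurable_runMin hfm hψ n)]
    have := integral_mono (hint (n + 1)) (hint n) (fun x => runMin_antitone f ψ n x)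
    linarith
  have hlim : Tendsto (fun n => ∫ x, min (-runMin f ψ n (f x)) (ψ x) ∂μ) atTop
      (𝓝 (∫ x, ψ x ∂μ)) := by
    refine tendsto_integral_of_dominated_convergence (fun _ => C) ?_ (integrable_const _) ?_ ?_
    · intro n
      exact ((((measurable_runMin hfm hψ n).comp hfm).neg).min hψ).aestronglyMeasurable
    · intro n
      refine Eventually.of_forall fun x => ?_
      have h2 := abs_le.1 (hC x)
      have h3 := runMin_nonpos f ψ n (f x)
      rw [Real.norm_eq_abs, abs_le]
      refine ⟨le_min ?_ h2.1, (min_le_right _ _).trans h2.2⟩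
      have := (abs_nonneg _).trans (hC x)
      linarith
    · filter_upwards [haef] with x hx
      simp only [hA, mem_ofPred_eq] at hx
      push Not at hx
      obtain ⟨K, hK⟩ := exists_nat_ge (ψ x)
      obtain ⟨N, hN⟩ := hx K
      refine tendsto_const_nhds.congr' ?_
      filter_upwards [eventually_ge_atTop N] with n hn
      symm
      apply min_eq_right
      have h4 : runMin f ψ n (f x) ≤ runMin f ψ N (f x) :=
        antitone_nat_of_succ_le (f := fun n => runMin f ψ n (f x))
          (fun n => runMin_antitone f ψ n (f x)) hn
      linarith [runMin_le_birk f ψ N (f x)]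
  exact absurd (le_of_tendsto' hlim hle) (not_le.2 hpos)

/-- The lower half of Birkhoff's ergodic theorem for bounded functions. -/
lemma ae_birk_ge [MeasurableSpace X] {μ : Measure X} [IsProbabilityMeasure μ]
    {f : X → X} (herg : Ergodic f μ) {φ : X → ℝ} (hφ : Measurable φ) {C : ℝ}
    (hC : ∀ x, |φ x| ≤ C) {c : ℝ} (hc : c < ∫ x, φ x ∂μ) :
    ∀ᵐ x ∂μ, ∃ N : ℕ, ∀ n ≥ N, n * c ≤ birk f φ n x := by
  obtain ⟨c', hc1, hc2⟩ := exists_between hc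
  have hint : Integrable φ μ := integrable_of_bdd hφ hC
  have h := ae_birk_bddBelow herg (ψ := fun x => φ x - c') (hφ.sub_const c') (C := C + |c'|)
    (fun x => (abs_sub _ _).trans (by linarith [hC x]))
    (by rw [integral_sub hint (integrable_const _)]; simpa using hc2)
  filter_upwards [h] with x ⟨K, hK⟩
  obtain ⟨N, hN⟩ := exists_nat_ge (K / (c' - c))
  refine ⟨N, fun n hn => ?_⟩
  have h1 := hK n
  rw [birk_sub_const] at h1
  have h2 : (K : ℝ) ≤ n * (c' - c) := by
    rw [div_le_iff₀ (by linarith)] at hN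
    have : (N : ℝ) ≤ n := by exact_mod_cast hn
    nlinarith
  linarith

lemma ae_birk_le [MeasurableSpace X] {μ : Measure X} [IsProbabilityMeasure μ]
    {f : X → X} (herg : Ergodic f μ) {φ : X → ℝ} (hφ : Measurable φ) {C : ℝ}
    (hC : ∀ x, |φ x| ≤ C) {c : ℝ} (hc : ∫ x, φ x ∂μ < c) :
    ∀ᵐ x ∂μ, ∃ N : ℕ, ∀ n ≥ N, birk f φ n x ≤ n * c := by
  have h := ae_birk_ge herg (φ := fun x => -φ x) hφ.neg (C := C)
    (fun x => by rw [abs_neg]; exact hC x) (c := -c)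
    (by rw [integral_neg]; linarith)
  filter_upwards [h] with x ⟨N, hN⟩
  refine ⟨N, fun n hn => ?_⟩
  have := hN n hn
  rw [birk_neg] at this
  linarith

/-! ### Words and their entropies -/

/-- The `n`-word of `x`: the itinerary `ι x, ι (f x), …, ι (f^{n-1} x)`.  A finite partition is
encoded by its index map `ι : X → Fin m`. -/
def word (f : X → X) {m : ℕ} (ι : X → Fin m) (n : ℕ) (x : X) : Fin n → Fin m :=
  fun k => ι (f^[(k : ℕ)] x)

/-- The probability that the `n`-word equals `w`. -/
def wp [MeasurableSpace X] (μ : Measure X) (f : X → X) {m : ℕ} (ι : X → Fin m) (n : ℕ)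
    (w : Fin n → Fin m) : ℝ :=
  μ.real {x | word f ι n x = w}

/-- The entropy of the distribution of `n`-words. -/
def wordEnt [MeasurableSpace X] (μ : Measure X) (f : X → X) {m : ℕ} (ι : X → Fin m) (n : ℕ) : ℝ :=
  ∑ w : Fin n → Fin m, Real.negMulLog (wp μ f ι n w)

/-- The conditional probability of the first letter of `v` given the `j` letters after it
(it is `0` if those have probability `0`). -/
def cp [MeasurableSpace X] (μ : Measure X) (f : X → X) {m : ℕ} (ι : X → Fin m) (j : ℕ)
    (v : Fin (j + 1) → Fin m) : ℝ :=
  wp μ f ι (j + 1) v / wp μ f ι j (Fin.tail v)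

lemma word_succ (f : X → X) {m : ℕ} (ι : X → Fin m) (n : ℕ) (x : X) :
    word f ι (n + 1) x = Fin.cons (ι x) (word f ι n (f x)) := by
  funext k
  refine Fin.cases ?_ (fun i => ?_) k
  · simp [word]
  · simp [word, Function.iterate_succ_apply]

lemma tail_word (f : X → X) {m : ℕ} (ι : X → Fin m) (n : ℕ) (x : X) :
    Fin.tail (word f ι (n + 1) x) = word f ι n (f x) := by
  rw [word_succ, Fin.tail_cons]

lemma sum_cons {m n : ℕ} (F : (Fin (n + 1) → Fin m) → ℝ) :
    ∑ v, F v = ∑ w : Fin n → Fin m, ∑ i : Fin m, F (Fin.cons i w) := by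
  rw [← (Fin.consEquiv (fun _ : Fin (n + 1) => Fin m)).sum_comp F, Fintype.sum_prod_type,
    Finset.sum_comm]
  rfl

section WordMeasure

variable [MeasurableSpace X] {μ : Measure X} [IsProbabilityMeasure μ] {f : X → X} {m : ℕ}
  {ι : X → Fin m}

lemma measurable_word (hf : Measurable f) (hι : Measurable ι) (n : ℕ) :
    Measurable (word f ι n) :=
  measurable_pi_lambda _ fun k => hι.comp (hf.iterate k)

lemma wp_nonneg (n : ℕ) (w : Fin n → Fin m) : 0 ≤ wp μ f ι n w := measureReal_nonneg

lemma wp_le_one (n : ℕ) (w : Fin n → Fin m) : wp μ f ι n w ≤ 1 := measureReal_le_one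

lemma integral_word (hf : Measurable f) (hι : Measurable ι) (n : ℕ) (F : (Fin n → Fin m) → ℝ) :
    ∫ x, F (word f ι n x) ∂μ = ∑ w, wp μ f ι n w * F w := by
  have hw := measurable_word hf hι n
  rw [← integral_map hw.aemeasurable (measurable_of_finite F).aestronglyMeasurable]
  have : IsFiniteMeasure (Measure.map (word f ι n) μ) := inferInstance
  rw [integral_fintype (Integrable.of_finite)]
  refine Finset.sum_congr rfl fun w _ => ?_
  rw [map_measureReal_apply hw (measurableSet_singleton w)]
  rfl

lemma integrable_word (hf : Measurable f) (hι : Measurable ι) (n : ℕ)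
    (F : (Fin n → Fin m) → ℝ) : Integrable (fun x => F (word f ι n x)) μ :=
  integrable_of_bdd ((measurable_of_finite F).comp (measurable_word hf hι n))
    (C := ∑ w, |F w|) (fun _ => Finset.single_le_sum (f := fun w => |F w|)
      (fun w _ => abs_nonneg (F w)) (Finset.mem_univ _))

lemma integral_word_comp (hf : MeasurePreserving f μ μ) (hι : Measurable ι) (n : ℕ)
    (F : (Fin n → Fin m) → ℝ) :
    ∫ x, F (word f ι n (f x)) ∂μ = ∑ w, wp μ f ι n w * F w := by
  rw [integral_comp_mp hf (φ := fun x => F (word f ι n x))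
    ((measurable_of_finite F).comp (measurable_word hf.measurable hι n)),
    integral_word hf.measurable hι]

lemma sum_wp (hf : Measurable f) (hι : Measurable ι) (n : ℕ) : ∑ w, wp μ f ι n w = 1 := by
  have := integral_word (μ := μ) hf hι n (fun _ => 1)
  simpa using this.symm

lemma sum_wp_cons (hf : MeasurePreserving f μ μ) (hι : Measurable ι) (n : ℕ)
    (w : Fin n → Fin m) : ∑ i, wp μ f ι (n + 1) (Fin.cons i w) = wp μ f ι n w := by
  classical
  have h1 := integral_word_comp hf hι n (fun v => if v = w then (1 : ℝ) else 0)
  have h2 := integral_word (μ := μ) hf.measurable hι (n + 1)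
    (fun v => if Fin.tail v = w then (1 : ℝ) else 0)
  simp only [tail_word] at h2
  rw [h1, sum_cons] at h2
  simpa [Fin.tail_cons, Finset.sum_ite_eq] using h2.symm

lemma wp_cons_le (hf : MeasurePreserving f μ μ) (hι : Measurable ι) (n : ℕ)
    (i : Fin m) (w : Fin n → Fin m) : wp μ f ι (n + 1) (Fin.cons i w) ≤ wp μ f ι n w := by
  rw [← sum_wp_cons hf hι n w]
  exact Finset.single_le_sum (f := fun i => wp μ f ι (n + 1) (Fin.cons i w : Fin (n + 1) → Fin m))
    (fun i _ => wp_nonneg _ _) (Finset.mem_univ i)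

lemma cp_nonneg (j : ℕ) (v : Fin (j + 1) → Fin m) : 0 ≤ cp μ f ι j v :=
  div_nonneg (wp_nonneg _ _) (wp_nonneg _ _)

lemma cp_le_one (hf : MeasurePreserving f μ μ) (hι : Measurable ι) (j : ℕ)
    (v : Fin (j + 1) → Fin m) : cp μ f ι j v ≤ 1 := by
  refine div_le_one_of_le₀ ?_ (wp_nonneg _ _)
  have := wp_cons_le hf hι j (v 0) (Fin.tail v)
  rwa [Fin.cons_self_tail] at this

lemma sum_cp_cons_le (hf : MeasurePreserving f μ μ) (hι : Measurable ι) (j : ℕ)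
    (w : Fin j → Fin m) : ∑ i, cp μ f ι j (Fin.cons i w) ≤ 1 := by
  simp only [cp, Fin.tail_cons]
  rw [← Finset.sum_div, sum_wp_cons hf hι]
  exact div_self_le_one _

lemma ae_wp_word_pos (n : ℕ) :
    ∀ᵐ x ∂μ, 0 < wp μ f ι n (word f ι n x) := by
  have h : ∀ᵐ x ∂μ, ∀ w, wp μ f ι n w = 0 → word f ι n x ≠ w := by
    rw [ae_all_iff]
    intro w
    by_cases hw : wp μ f ι n w = 0
    · have h0 : μ {x | word f ι n x = w} = 0 := by
        simpa [wp, measureReal_def, ENNReal.toReal_eq_zero_iff] using hw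
      filter_upwards [measure_eq_zero_iff_ae_notMem.1 h0] with x hx _
      exact hx
    · exact Eventually.of_forall fun x h => absurd h hw
  filter_upwards [h] with x hx
  exact lt_of_le_of_ne (wp_nonneg _ _) fun h0 => hx _ h0.symm rfl

lemma ae_cp_word_pos (hf : MeasurePreserving f μ μ) (j : ℕ) :
    ∀ᵐ x ∂μ, 0 < cp μ f ι j (word f ι (j + 1) x) := by
  filter_upwards [ae_wp_word_pos (μ := μ) (f := f) (ι := ι) (j + 1),
    hf.quasiMeasurePreserving.ae (ae_wp_word_pos (μ := μ) (f := f) (ι := ι) j)] with x h1 h2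
  unfold cp
  rw [tail_word]
  exact div_pos h1 h2

/-- The conditional information has integral `H_{j+1} - H_j`. -/
lemma integral_neg_log_cp (hf : MeasurePreserving f μ μ) (hι : Measurable ι) (j : ℕ) :
    ∫ x, -Real.log (cp μ f ι j (word f ι (j + 1) x)) ∂μ
      = wordEnt μ f ι (j + 1) - wordEnt μ f ι j := by
  have h1 : ∫ x, -Real.log (cp μ f ι j (word f ι (j + 1) x)) ∂μ
      = ∫ x, (-Real.log (wp μ f ι (j + 1) (word f ι (j + 1) x))
        - -Real.log (wp μ f ι j (word f ι j (f x)))) ∂μ := by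
    apply integral_congr_ae
    filter_upwards [ae_wp_word_pos (μ := μ) (f := f) (ι := ι) (j + 1),
      hf.quasiMeasurePreserving.ae (ae_wp_word_pos (μ := μ) (f := f) (ι := ι) j)] with x h1 h2
    unfold cp
    rw [tail_word, Real.log_div h1.ne' h2.ne']
    ring
  have hi1 := integrable_word (μ := μ) hf.measurable hι (j + 1)
    (fun v => -Real.log (wp μ f ι (j + 1) v))
  have hi2 : Integrable (fun x => -Real.log (wp μ f ι j (word f ι j (f x)))) μ := by
    have := integrable_word (μ := μ) hf.measurable hι (j + 1)
      (fun v => -Real.log (wp μ f ι j (Fin.tail v)))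
    simpa only [tail_word] using this
  rw [h1, integral_sub hi1 hi2,
    integral_word hf.measurable hι (j + 1) (fun v => -Real.log (wp μ f ι (j + 1) v)),
    integral_word_comp hf hι j (fun v => -Real.log (wp μ f ι j v))]
  unfold wordEnt
  congr 1 <;> refine Finset.sum_congr rfl fun w _ => ?_ <;> rw [Real.negMulLog] <;> ring

/-- The reciprocal of the conditional probability has integral at most the number of letters;
this controls the tails of the conditional information uniformly in `j`. -/
lemma integral_inv_cp_le (hf : MeasurePreserving f μ μ) (hι : Measurable ι) (j : ℕ) :
    ∫ x, (cp μ f ι j (word f ι (j + 1) x))⁻¹ ∂μ ≤ m := by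
  rw [integral_word hf.measurable hι (j + 1) (fun v => (cp μ f ι j v)⁻¹), sum_cons]
  calc ∑ w : Fin j → Fin m, ∑ i : Fin m,
        wp μ f ι (j + 1) (Fin.cons i w) * (cp μ f ι j (Fin.cons i w))⁻¹
      ≤ ∑ w : Fin j → Fin m, ∑ _i : Fin m, wp μ f ι j w := by
        refine Finset.sum_le_sum fun w _ => Finset.sum_le_sum fun i _ => ?_
        simp only [cp, Fin.tail_cons, inv_div]
        rcases eq_or_ne (wp μ f ι (j + 1) (Fin.cons i w)) 0 with h0 | h0
        · simp [h0, wp_nonneg]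
        · rw [mul_div_cancel₀ _ h0]
    _ = m := by
        simp [← Finset.mul_sum, sum_wp hf.measurable hι]

end WordMeasure

lemma wordEnt_nonneg [MeasurableSpace X] (μ : Measure X) [IsProbabilityMeasure μ] (f : X → X)
    {m : ℕ} (ι : X → Fin m) (n : ℕ) : 0 ≤ wordEnt μ f ι n :=
  Finset.sum_nonneg fun _ _ => Real.negMulLog_nonneg (wp_nonneg _ _) (wp_le_one _ _)

lemma wordEnt_zero [MeasurableSpace X] (μ : Measure X) [IsProbabilityMeasure μ] (f : X → X)
    {m : ℕ} (ι : X → Fin m) : wordEnt μ f ι 0 = 0 := by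
  have h : ∀ w : Fin 0 → Fin m, wp μ f ι 0 w = 1 := by
    intro w
    have : {x | word f ι 0 x = w} = univ := by
      ext x; simp [Subsingleton.elim (word f ι 0 x) w]
    simp [wp, this]
  simp [wordEnt, h]

/-! ### Counting typical words -/

/-- The weight `∏_{i<n} q (v_i, …, v_{i+j})` of a word `v` of length `j + n`, where `q` is a
function on words of length `j + 1`. -/
def markovWeight {m j : ℕ} (q : (Fin (j + 1) → Fin m) → ℝ) :
    (n : ℕ) → (Fin (j + n) → Fin m) → ℝ
  | 0, _ => 1
  | n + 1, v => q (fun l => v (l.castLE (by omega))) * markovWeight q n (Fin.tail v)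

lemma markovWeight_nonneg {m j : ℕ} {q : (Fin (j + 1) → Fin m) → ℝ} (hq : ∀ v, 0 ≤ q v) (n : ℕ) :
    ∀ v, 0 ≤ markovWeight q n v := by
  induction n with
  | zero => intro v; exact zero_le_one
  | succ n ih => intro v; exact mul_nonneg (hq _) (ih _)

lemma sum_markovWeight_le {m j : ℕ} {q : (Fin (j + 1) → Fin m) → ℝ} (hq : ∀ v, 0 ≤ q v)
    (hq1 : ∀ w : Fin j → Fin m, ∑ i, q (Fin.cons i w) ≤ 1) (n : ℕ) :
    ∑ v, markovWeight q n v ≤ (m : ℝ) ^ j := by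
  induction n with
  | zero => simp [markovWeight]
  | succ n ih =>
    refine le_trans ?_ ih
    change ∑ v : Fin (j + n + 1) → Fin m, markovWeight q (n + 1) v ≤ _
    rw [sum_cons]
    refine Finset.sum_le_sum fun w _ => ?_
    have h : ∀ i : Fin m, markovWeight q (n + 1) (Fin.cons i w : Fin (j + n + 1) → Fin m)
        = q (Fin.cons i (fun l => w (l.castLE (by omega)))) * markovWeight q n w := by
      intro i
      have h1 : (fun l : Fin (j + 1) => (Fin.cons i w : Fin (j + n + 1) → Fin m)
          (l.castLE (by omega))) = Fin.cons i (fun l => w (l.castLE (by omega))) := by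
        funext l
        refine Fin.cases rfl (fun l => rfl) l
      simp only [markovWeight]
      rw [← h1]
      rfl
    simp_rw [h]
    rw [← Finset.sum_mul]
    exact mul_le_of_le_one_left (markovWeight_nonneg hq n w) (hq1 _)

lemma markovWeight_word (f : X → X) {m j : ℕ} (ι : X → Fin m) {q : (Fin (j + 1) → Fin m) → ℝ}
    (n : ℕ) : ∀ x, (∀ i, 0 < q (word f ι (j + 1) (f^[i] x))) →
      Real.exp (-birk f (fun y => -Real.log (q (word f ι (j + 1) y))) n x)
        = markovWeight q n (word f ι (j + n) x) := by
  induction n with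
  | zero => intro x _; simp [birk_zero, markovWeight]
  | succ n ih =>
    intro x hx
    have h1 := ih (f x) (fun i => by
      have := hx (i + 1)
      rwa [Function.iterate_succ_apply] at this)
    have h0 : 0 < q (word f ι (j + 1) x) := hx 0
    rw [birk_succ, neg_add, Real.exp_add, h1, neg_neg, Real.exp_log h0]
    simp only [markovWeight]
    congr 1

/-- The upper half of the Shannon–McMillan–Breiman theorem, in counting form: up to null sets the
space is exhausted by sets `G N` on which the number of words grows at a rate at most `t`, for any
`t` above the entropy.  For some `j` one has `H_{j+1} - H_j < t`; the `j`-step Markov weight of a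
typical word of length `j + n` is then at least `e^{-nt}`, while the weights sum to at most
`m ^ j`. -/
lemma exists_typical_words [MeasurableSpace X] {μ : Measure X} [IsProbabilityMeasure μ]
    {f : X → X} (herg : Ergodic f μ) {m : ℕ} {ι : X → Fin m} (hι : Measurable ι) {t : ℝ}
    (ht : ⨅ n : ℕ, wordEnt μ f ι (n + 1) / (n + 1) < t) :
    ∃ (j : ℕ) (G : ℕ → Set X), (∀ᵐ x ∂μ, ∃ N, x ∈ G N) ∧
      ∀ N n, N ≤ n → ∀ T : Finset (Fin (j + n) → Fin m),
        (∀ v ∈ T, ∃ x ∈ G N, word f ι (j + n) x = v) → (T.card : ℝ) ≤ m ^ j * Real.exp (n * t) := by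
  have hmp := herg.toMeasurePreserving
  obtain ⟨n₀, hn₀⟩ := exists_lt_of_ciInf_lt ht
  obtain ⟨j, hj⟩ : ∃ j, wordEnt μ f ι (j + 1) - wordEnt μ f ι j < t := by
    by_contra! hcon
    have h1 := Finset.sum_range_sub (wordEnt μ f ι) (n₀ + 1)
    rw [wordEnt_zero, sub_zero] at h1
    have h2 := Finset.card_nsmul_le_sum (Finset.range (n₀ + 1)) _ t (fun j _ => hcon j)
    rw [h1, Finset.card_range, nsmul_eq_mul] at h2
    rw [div_lt_iff₀ (by positivity)] at hn₀
    push_cast at h2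
    linarith
  set q := cp μ f ι j with hq
  set ξ : X → ℝ := fun y => -Real.log (q (word f ι (j + 1) y)) with hξ
  have hξm : Measurable ξ :=
    (measurable_of_finite (fun v => -Real.log (q v))).comp (measurable_word hmp.measurable hι _)
  have hξb : ∀ x, |ξ x| ≤ ∑ v, |(-Real.log (q v))| := fun x =>
    Finset.single_le_sum (f := fun v => |(-Real.log (q v))|)
      (fun v _ => abs_nonneg _) (Finset.mem_univ _)
  have hξi : ∫ x, ξ x ∂μ < t := by
    rw [hξ, hq, integral_neg_log_cp hmp hι]; exact hj
  refine ⟨j, fun N => {x | (∀ i, 0 < q (word f ι (j + 1) (f^[i] x))) ∧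
    ∀ n ≥ N, birk f ξ n x ≤ n * t}, ?_, ?_⟩
  · have h1 : ∀ᵐ x ∂μ, ∀ i, 0 < q (word f ι (j + 1) (f^[i] x)) := by
      rw [ae_all_iff]
      intro i
      exact (hmp.iterate i).quasiMeasurePreserving.ae (ae_cp_word_pos hmp j)
    filter_upwards [h1, ae_birk_le herg hξm hξb hξi] with x hx ⟨N, hN⟩
    exact ⟨N, hx, hN⟩
  · intro N n hn T hT
    have h1 : ∀ v ∈ T, Real.exp (-(n * t)) ≤ markovWeight q n v := by
      intro v hv
      obtain ⟨x, ⟨hx1, hx2⟩, rfl⟩ := hT v hv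
      rw [← markovWeight_word f ι n x hx1]
      exact Real.exp_le_exp.2 (neg_le_neg (hx2 n hn))
    have h2 := Finset.card_nsmul_le_sum T _ _ h1
    have h3 : ∑ v ∈ T, markovWeight q n v ≤ (m : ℝ) ^ j :=
      (Finset.sum_le_univ_sum_of_nonneg (markovWeight_nonneg (cp_nonneg j) n)).trans
        (sum_markovWeight_le (cp_nonneg j) (sum_cp_cons_le hmp hι j) n)
    rw [nsmul_eq_mul, Real.exp_neg] at h2
    have h4 := h2.trans h3
    rwa [← div_eq_mul_inv, div_le_iff₀ (Real.exp_pos _)] at h4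

/-! ### Conditioning on the future -/

/-- Truncation of a probability to `[e^{-M}, 1]`. -/
def clamp (M t : ℝ) : ℝ := max (min t 1) (Real.exp (-M))

lemma clamp_pos (M t : ℝ) : 0 < clamp M t := lt_max_of_lt_right (Real.exp_pos _)

lemma clamp_le_one {M : ℝ} (hM : 0 ≤ M) (t : ℝ) : clamp M t ≤ 1 :=
  max_le (min_le_right _ _) (Real.exp_le_one_iff.2 (by linarith))

lemma continuous_clamp (M : ℝ) : Continuous (clamp M) :=
  (continuous_id.min continuous_const).max continuous_const

lemma continuous_log_clamp (M : ℝ) : Continuous fun t => -Real.log (clamp M t) :=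
  ((continuous_clamp M).log fun t => (clamp_pos M t).ne').neg

lemma abs_log_clamp_le {M : ℝ} (hM : 0 ≤ M) (t : ℝ) : |(-Real.log (clamp M t))| ≤ M := by
  have h1 : Real.log (clamp M t) ≤ 0 := Real.log_nonpos (clamp_pos M t).le (clamp_le_one hM t)
  have h2 : -M ≤ Real.log (clamp M t) := by
    rw [Real.le_log_iff_exp_le (clamp_pos M t)]
    exact le_max_right _ _
  rw [abs_le]
  constructor <;> linarith

lemma neg_log_le_clamp {M c : ℝ} (hc : 0 < c) (hc1 : c ≤ 1) :
    -Real.log c ≤ -Real.log (clamp M c) + Real.exp (-M) * c⁻¹ := by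
  unfold clamp
  rw [min_eq_left hc1]
  have hpos : 0 < Real.exp (-M) * c⁻¹ := by positivity
  rcases le_total (Real.exp (-M)) c with h | h
  · rw [max_eq_left h]; linarith
  · rw [max_eq_right h]
    have := Real.log_le_sub_one_of_pos hpos
    rw [Real.log_mul (Real.exp_pos _).ne' (inv_pos.2 hc).ne', Real.log_inv] at this
    linarith

lemma measurable_diag {Y : Type*} [MeasurableSpace Y] {m : ℕ} {ι : Y → Fin m} (hι : Measurable ι)
    {k : Fin m → Y → ℝ} (hk : ∀ i, Measurable (k i)) : Measurable fun y => k (ι y) y :=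
  (measurable_from_prod_countable_right (f := fun p : Fin m × Y => k p.1 p.2) hk).comp
    (hι.prodMk measurable_id)

section Future

variable [mX : MeasurableSpace X] {μ : Measure X} [IsProbabilityMeasure μ] {f : X → X} {m : ℕ}
  {ι : X → Fin m}

/-- The filtration whose `j`-th σ-algebra is generated by the letters at times `1, …, j`. -/
def futureFiltration (hf : Measurable f) (hι : Measurable ι) : Filtration ℕ mX where
  seq j := MeasurableSpace.comap (fun x => word f ι j (f x)) inferInstance
  mono' := by
    intro j k hjk
    have h : (fun x => word f ι j (f x))
        = (fun v : Fin k → Fin m => fun l : Fin j => v (l.castLE hjk)) ∘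
          fun x => word f ι k (f x) := rfl
    change MeasurableSpace.comap _ _ ≤ MeasurableSpace.comap _ _
    rw [h, ← MeasurableSpace.comap_comp]
    exact MeasurableSpace.comap_mono (measurable_of_finite _).comap_le
  le' j := ((measurable_word hf hι j).comp hf).comap_le

/-- The σ-algebra generated by all letters at times `1, 2, …`. -/
abbrev futureSigma (hf : Measurable f) (hι : Measurable ι) : MeasurableSpace X :=
  ⨆ j, futureFiltration hf hι j

/-- The σ-algebra generated by all letters at times `0, 1, …`. -/
abbrev itinSigma (f : X → X) (ι : X → Fin m) : MeasurableSpace X :=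
  ⨆ n, MeasurableSpace.comap (word f ι n) inferInstance

lemma futureSigma_le (hf : Measurable f) (hι : Measurable ι) : futureSigma hf hι ≤ mX :=
  iSup_le fun j => (futureFiltration hf hι).le j

lemma itinSigma_le (hf : Measurable f) (hι : Measurable ι) : itinSigma f ι ≤ mX :=
  iSup_le fun n => (measurable_word hf hι n).comap_le

lemma futureSigma_le_itinSigma (hf : Measurable f) (hι : Measurable ι) :
    futureSigma hf hι ≤ itinSigma f ι := by
  refine iSup_le fun j => le_trans ?_
    (le_iSup (fun n => MeasurableSpace.comap (word f ι n) inferInstance) (j + 1))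
  have h : (fun x => word f ι j (f x)) = Fin.tail ∘ word f ι (j + 1) := by
    funext x; exact (tail_word f ι j x).symm
  change MeasurableSpace.comap (fun x => word f ι j (f x)) _ ≤ _
  rw [h, ← MeasurableSpace.comap_comp]
  exact MeasurableSpace.comap_mono (measurable_of_finite _).comap_le

lemma measurable_futureSigma (hf : Measurable f) (hι : Measurable ι) :
    Measurable[futureSigma hf hι, itinSigma f ι] f := by
  rw [measurable_iff_comap_le, itinSigma, MeasurableSpace.comap_iSup]
  refine iSup_le fun j => le_trans ?_ (le_iSup (fun j => (futureFiltration hf hι j)) j)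
  rw [MeasurableSpace.comap_comp]
  exact le_rfl

lemma measurable_word_itinSigma (f : X → X) (ι : X → Fin m) (n : ℕ) :
    Measurable[itinSigma f ι] (word f ι n) :=
  (comap_measurable (word f ι n)).mono (le_iSup (fun n =>
      MeasurableSpace.comap (word f ι n) inferInstance) n) le_rfl

/-- The indicator function of the event that the letter at time `0` is `i`. -/
def letInd (ι : X → Fin m) (i : Fin m) : X → ℝ := {x | ι x = i}.indicator fun _ => 1

lemma measurable_letInd (hι : Measurable ι) (i : Fin m) : Measurable (letInd ι i) :=
  measurable_const.indicator (hι (measurableSet_singleton i))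

lemma letInd_nonneg (i : Fin m) (x : X) : 0 ≤ letInd ι i x :=
  indicator_nonneg (fun _ _ => zero_le_one) _

lemma letInd_le_one (i : Fin m) (x : X) : letInd ι i x ≤ 1 :=
  indicator_le_self' (fun _ _ => zero_le_one) _

lemma abs_letInd_le (i : Fin m) (x : X) : |letInd ι i x| ≤ 1 := by
  rw [abs_of_nonneg (letInd_nonneg i x)]; exact letInd_le_one i x

lemma integrable_letInd (hι : Measurable ι) (i : Fin m) : Integrable (letInd ι i) μ :=
  integrable_of_bdd (measurable_letInd hι i) (abs_letInd_le i)

/-- `cp` is the conditional probability of the letter at time `0` given those at times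
`1, …, j`. -/
lemma condExp_letInd (hf : MeasurePreserving f μ μ) (hι : Measurable ι) (j : ℕ) (i : Fin m) :
    (fun x => cp μ f ι j (Fin.cons i (word f ι j (f x))))
      =ᵐ[μ] μ[letInd ι i | futureFiltration hf.measurable hι j] := by
  classical
  have hwm : Measurable fun x => word f ι j (f x) := (measurable_word hf.measurable hι j).comp
    hf.measurable
  have hi : Integrable (fun x => cp μ f ι j (Fin.cons i (word f ι j (f x)))) μ :=
    integrable_of_bdd ((measurable_of_finite (fun v : Fin j → Fin m =>
      cp μ f ι j (Fin.cons i v))).comp hwm) (C := 1)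
      (fun x => by rw [abs_of_nonneg (cp_nonneg _ _)]; exact cp_le_one hf hι _ _)
  refine ae_eq_condExp_of_forall_setIntegral_eq ((futureFiltration hf.measurable hι).le j)
    (integrable_letInd hι i) (fun s _ _ => hi.integrableOn) ?_ ?_
  · rintro s ⟨T, hT, rfl⟩ -
    rw [← integral_indicator (hwm hT), ← integral_indicator (hwm hT)]
    obtain ⟨F₁, hF₁⟩ : ∃ F : (Fin j → Fin m) → ℝ,
        F = fun v => if v ∈ T then cp μ f ι j (Fin.cons i v) else 0 := ⟨_, rfl⟩
    obtain ⟨F₂, hF₂⟩ : ∃ F : (Fin (j + 1) → Fin m) → ℝ,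
        F = fun v : Fin (j + 1) → Fin m => if (Fin.tail v : Fin j → Fin m) ∈ T then (if v 0 = i then 1 else 0) else 0 := ⟨_, rfl⟩
    have h1 : ∀ x, ((fun x => word f ι j (f x)) ⁻¹' T).indicator
        (fun x => cp μ f ι j (Fin.cons i (word f ι j (f x)))) x = F₁ (word f ι j (f x)) := by
      intro x; simp [indicator_apply, hF₁]
    have h2 : ∀ x, ((fun x => word f ι j (f x)) ⁻¹' T).indicator (letInd ι i) x
        = F₂ (word f ι (j + 1) x) := by
      intro x
      simp only [hF₂, tail_word, indicator_apply, mem_preimage, letInd, mem_ofPred_eq]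
      rfl
    rw [integral_congr_ae (Eventually.of_forall h1), integral_congr_ae (Eventually.of_forall h2),
      integral_word_comp hf hι j, integral_word hf.measurable hι (j + 1), sum_cons, hF₁, hF₂]
    refine Finset.sum_congr rfl fun w _ => ?_
    simp only [Fin.tail_cons, Fin.cons_zero, cp]
    by_cases hw : w ∈ T
    · simp only [hw, if_true, mul_ite, mul_one, mul_zero, Finset.sum_ite_eq', Finset.mem_univ]
      rcases eq_or_ne (wp μ f ι j w) 0 with h0 | h0
      · have := wp_cons_le hf hι j i w
        rw [h0] at this ⊢
        rw [le_antisymm this (wp_nonneg _ _)]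
        simp
      · rw [mul_div_cancel₀ _ h0]
    · simp [hw]
  · have : Measurable[futureFiltration hf.measurable hι j] fun x => word f ι j (f x) :=
      comap_measurable _
    exact (((measurable_of_finite (fun v : Fin j → Fin m =>
      cp μ f ι j (Fin.cons i v))).comp this).stronglyMeasurable).aestronglyMeasurable

/-- The lower half of the Shannon–McMillan–Breiman theorem.  `ξ` is (a truncation of) the
information of the letter at time `0` given the whole future.  By Lévy's theorem it is the limit
of the conditional informations given finite futures, whose means `H_{j+1} - H_j` average to
`H_n / n`.  The last assertion plays the role of `μ [w] ≤ exp (-S_n ξ)` on the cylinder `[w]`. -/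
lemma exists_information (hf : MeasurePreserving f μ μ) (hι : Measurable ι) {ε : ℝ} (hε : 0 < ε) :
    ∃ (ξ : X → ℝ) (M : ℝ), Measurable ξ ∧ (∀ x, |ξ x| ≤ M) ∧
      (⨅ n : ℕ, wordEnt μ f ι (n + 1) / (n + 1)) - ε ≤ ∫ x, ξ x ∂μ ∧
      ∀ (n : ℕ) (w : Fin n → Fin m),
        ∫ x, {x | word f ι n x = w}.indicator (fun x => Real.exp (birk f ξ n x)) x ∂μ ≤ 1 := by
  have hfm := hf.measurable
  obtain ⟨M, hM0, hM⟩ : ∃ M : ℝ, 0 ≤ M ∧ Real.exp (-M) * m ≤ ε := by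
    have h : Tendsto (fun M : ℝ => Real.exp (-M) * m) atTop (𝓝 (0 * m)) :=
      (Real.tendsto_exp_neg_atTop_nhds_zero).mul_const _
    rw [zero_mul] at h
    obtain ⟨M, h1, h2⟩ := ((h.eventually_lt_const hε).and (eventually_ge_atTop 0)).exists
    exact ⟨M, h2, h1.le⟩
  have hFle := futureSigma_le hfm hι
  have hAle := itinSigma_le hfm hι
  have hFA := futureSigma_le_itinSigma hfm hι
  have hfF := measurable_futureSigma hfm hι
  have hfA : Measurable[itinSigma f ι, itinSigma f ι] f := hfF.mono hFA le_rfl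
  have hwA := measurable_word_itinSigma f ι
  have hιA : Measurable[itinSigma f ι] ι := (measurable_pi_apply (0 : Fin 1)).comp (hwA 1)
  set E : Fin m → X → ℝ := fun i => μ[letInd ι i | futureSigma hfm hι] with hE
  have hEF : ∀ i, Measurable[futureSigma hfm hι] (E i) := fun i => stronglyMeasurable_condExp.measurable
  have hE1 : ∀ i, ∀ᵐ x ∂μ, E i x ≤ 1 := by
    intro i
    have h := condExp_mono (m := futureSigma hfm hι) (integrable_letInd (μ := μ) hι i) (integrable_const (1 : ℝ))
      (Eventually.of_forall (letInd_le_one i))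
    rw [condExp_const hFle] at h
    exact h
  set ξ : X → ℝ := fun x => -Real.log (clamp M (E (ι x) x)) with hξ
  have hξA : Measurable[itinSigma f ι] ξ :=
    @measurable_diag X (itinSigma f ι) m ι hιA (fun i x => -Real.log (clamp M (E i x)))
      (fun i => (continuous_log_clamp M).measurable.comp ((hEF i).mono hFA le_rfl))
  have hξm : Measurable ξ := hξA.mono hAle le_rfl
  have hξb : ∀ x, |ξ x| ≤ M := fun x => abs_log_clamp_le hM0 _
  refine ⟨ξ, M, hξm, hξb, ?_, ?_⟩
  · have hlim : ∀ᵐ x ∂μ, Tendsto (fun j => cp μ f ι j (word f ι (j + 1) x)) atTop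
        (𝓝 (E (ι x) x)) := by
      have h1 : ∀ᵐ x ∂μ, ∀ i, Tendsto (fun j => (μ[letInd ι i | futureFiltration hfm hι j]) x) atTop (𝓝 (E i x)) :=
        ae_all_iff.2 fun i => tendsto_ae_condExp (letInd ι i)
      have h2 : ∀ᵐ x ∂μ, ∀ i, ∀ j, cp μ f ι j (Fin.cons i (word f ι j (f x)))
          = (μ[letInd ι i | futureFiltration hfm hι j]) x :=
        ae_all_iff.2 fun i => ae_all_iff.2 fun j => condExp_letInd hf hι j i
      filter_upwards [h1, h2] with x hx1 hx2
      simpa only [word_succ, hx2] using hx1 (ι x)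
    have hcm : ∀ j, Measurable fun x => -Real.log (clamp M (cp μ f ι j (word f ι (j + 1) x))) :=
      fun j => (measurable_of_finite (fun v => -Real.log (clamp M (cp μ f ι j v)))).comp
        (measurable_word hfm hι (j + 1))
    set a : ℕ → ℝ := fun j => ∫ x, -Real.log (clamp M (cp μ f ι j (word f ι (j + 1) x))) ∂μ
      with ha
    have hconv : Tendsto a atTop (𝓝 (∫ x, ξ x ∂μ)) := by
      refine tendsto_integral_of_dominated_convergence (fun _ => M)
        (fun j => (hcm j).aestronglyMeasurable) (integrable_const _) ?_ ?_
      · exact fun j => Eventually.of_forall fun x => abs_log_clamp_le hM0 _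
      · filter_upwards [hlim] with x hx
        exact ((continuous_log_clamp M).tendsto _).comp hx
    have hD : ∀ j, wordEnt μ f ι (j + 1) - wordEnt μ f ι j ≤ a j + ε := by
      intro j
      rw [← integral_neg_log_cp hf hι j]
      have hi1 := integrable_word (μ := μ) hfm hι (j + 1) (fun v => -Real.log (cp μ f ι j v))
      have hi2 : Integrable (fun x => -Real.log (clamp M (cp μ f ι j (word f ι (j + 1) x)))) μ :=
        integrable_of_bdd (hcm j) (fun x => abs_log_clamp_le hM0 _)
      have hi3 := integrable_word (μ := μ) hfm hι (j + 1)
        (fun v => Real.exp (-M) * (cp μ f ι j v)⁻¹)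
      have h1 : ∫ x, -Real.log (cp μ f ι j (word f ι (j + 1) x)) ∂μ ≤
          ∫ x, (-Real.log (clamp M (cp μ f ι j (word f ι (j + 1) x)))
            + Real.exp (-M) * (cp μ f ι j (word f ι (j + 1) x))⁻¹) ∂μ := by
        refine integral_mono_ae hi1 (hi2.add hi3) ?_
        filter_upwards [ae_cp_word_pos hf j] with x hx
        exact neg_log_le_clamp hx (cp_le_one hf hι _ _)
      rw [integral_add hi2 hi3, integral_const_mul] at h1
      have h2 := mul_le_mul_of_nonneg_left (integral_inv_cp_le hf hι j) (Real.exp_pos (-M)).le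
      simp only [ha]
      linarith
    have hces := (hconv.cesaro.comp (tendsto_add_atTop_nat 1))
    rw [sub_le_iff_le_add]
    refine ge_of_tendsto' (hces.add_const ε) fun n => ?_
    refine (ciInf_le ⟨0, ?_⟩ n).trans ?_
    · rintro _ ⟨k, rfl⟩
      exact div_nonneg (wordEnt_nonneg μ f ι _) (by positivity)
    · have h1 := Finset.sum_range_sub (wordEnt μ f ι) (n + 1)
      rw [wordEnt_zero, sub_zero] at h1
      have h2 : wordEnt μ f ι (n + 1) ≤ ∑ j ∈ Finset.range (n + 1), (a j + ε) := by
        rw [← h1]; exact Finset.sum_le_sum fun j _ => hD j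
      rw [Finset.sum_add_distrib, Finset.sum_const, Finset.card_range, nsmul_eq_mul] at h2
      have hn : (0 : ℝ) < (n : ℝ) + 1 := by positivity
      rw [div_le_iff₀ hn]
      simp only [Function.comp]
      push_cast at h2 ⊢
      have h3 : ((n : ℝ) + 1)⁻¹ * (∑ j ∈ Finset.range (n + 1), a j) * ((n : ℝ) + 1)
          = ∑ j ∈ Finset.range (n + 1), a j := by field_simp
      rw [add_mul, h3]
      linarith
  · intro n
    have hφA : ∀ n (w : Fin n → Fin m), Measurable[itinSigma f ι]
        ({x | word f ι n x = w}.indicator (fun x => Real.exp (birk f ξ n x))) := fun n w =>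
      @Measurable.indicator X ℝ _ _ (itinSigma f ι) _ _
        (Real.measurable_exp.comp (@measurable_birk X _ (itinSigma f ι) f hfA ξ hξA n))
        (hwA n (measurableSet_singleton w))
    have hφb : ∀ n (w : Fin n → Fin m) x,
        |{x | word f ι n x = w}.indicator (fun x => Real.exp (birk f ξ n x)) x|
          ≤ Real.exp (n * M) := by
      intro n w x
      rw [abs_of_nonneg (indicator_nonneg (fun _ _ => (Real.exp_pos _).le) _)]
      refine (indicator_le_self' (fun _ _ => (Real.exp_pos _).le) _).trans ?_
      refine Real.exp_le_exp.2 ?_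
      have := Finset.sum_le_card_nsmul (Finset.range n) (fun k => ξ (f^[k] x)) M
        (fun k _ => (abs_le.1 (hξb _)).2)
      simpa [birk] using this
    induction n with
    | zero =>
      intro w
      have h : {x : X | word f ι 0 x = w} = univ := by
        ext x; simp [Subsingleton.elim (word f ι 0 x) w]
      simp [h, birk_zero]
    | succ n ih =>
      intro v
      set φ : X → ℝ := {x | word f ι n x = Fin.tail v}.indicator
        (fun x => Real.exp (birk f ξ n x)) with hφ
      set ψ : X → ℝ := fun x => (clamp M (E (v 0) x))⁻¹ * φ (f x) with hψ
      have hφm : Measurable φ := (hφA n _).mono hAle le_rfl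
      have hφ0 : ∀ x, 0 ≤ φ x := fun x => indicator_nonneg (fun _ _ => (Real.exp_pos _).le) _
      have hψF : Measurable[futureSigma hfm hι] ψ :=
        (((continuous_clamp M).measurable.comp (hEF (v 0))).inv).mul ((hφA n _).comp hfF)
      have hψm : Measurable ψ := hψF.mono hFle le_rfl
      have hψb : ∀ x, |ψ x| ≤ Real.exp M * Real.exp (n * M) := by
        intro x
        rw [hψ, abs_mul, abs_of_pos (inv_pos.2 (clamp_pos _ _))]
        refine mul_le_mul ?_ (hφb n _ _) (abs_nonneg _) (Real.exp_pos _).le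
        rw [inv_le_comm₀ (clamp_pos _ _) (Real.exp_pos _), ← Real.exp_neg]
        exact le_max_right _ _
      have hprod : {x | word f ι (n + 1) x = v}.indicator
          (fun x => Real.exp (birk f ξ (n + 1) x)) = letInd ι (v 0) * ψ := by
        funext x
        have hiff : word f ι (n + 1) x = v ↔ ι x = v 0 ∧ word f ι n (f x) = Fin.tail v := by
          rw [word_succ]
          constructor
          · rintro rfl; simp
          · rintro ⟨h1, h2⟩; rw [h1, h2, Fin.cons_self_tail]
        by_cases h1 : ι x = v 0
        · by_cases h2 : word f ι n (f x) = Fin.tail v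
          · simp only [indicator, mem_ofPred_eq, hiff, h1, h2, and_self, if_true, Pi.mul_apply,
              letInd, hψ, hφ, one_mul]
            rw [birk_succ, Real.exp_add, hξ]
            simp only [h1]
            rw [Real.exp_neg, Real.exp_log (clamp_pos _ _)]
          · simp [indicator, hiff, h1, h2, hψ, hφ]
        · simp [indicator, hiff, h1, letInd]
      have hψi : Integrable (letInd ι (v 0) * ψ) μ :=
        (integrable_of_bdd hψm hψb).bdd_mul (c := 1)
          (measurable_letInd hι _).aestronglyMeasurable
          (Eventually.of_forall (abs_letInd_le _))
      have hpull := condExp_mul_of_stronglyMeasurable_right (m := futureSigma hfm hι) hψF.stronglyMeasurable hψi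
        (integrable_letInd hι (v 0))
      have hφfi : Integrable (fun x => φ (f x)) μ :=
        integrable_of_bdd (hφm.comp hfm) (fun x => hφb n _ (f x))
      rw [hprod, ← integral_condExp hFle, integral_congr_ae hpull]
      calc ∫ x, (E (v 0) * ψ) x ∂μ ≤ ∫ x, φ (f x) ∂μ := by
            refine integral_mono_ae (integrable_condExp.congr hpull) hφfi ?_
            filter_upwards [hE1 (v 0)] with x hx
            simp only [Pi.mul_apply, hψ]
            rw [← mul_assoc]
            refine mul_le_of_le_one_left (hφ0 _) ?_
            rw [← div_eq_mul_inv, div_le_one (clamp_pos _ _)]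
            refine le_max_of_le_left ?_
            rw [min_eq_left hx]
        _ = ∫ x, φ x ∂μ := integral_comp_mp hf hφm
        _ ≤ 1 := ih _

end Future

/-! ### The measure of Bowen balls -/

/-- Hamming balls have small exponential growth rate: an exponential-moment bound. -/
lemma card_hamming_le {n m : ℕ} (w₀ : Fin n → Fin m) {l a : ℝ} (hl : 0 ≤ l) :
    ((Finset.univ.filter fun w : Fin n → Fin m => (hammingDist w w₀ : ℝ) ≤ n * a).card : ℝ)
      ≤ Real.exp (n * (l * a + m * Real.exp (-l))) := by
  classical
  set g : Fin n → Fin m → ℝ := fun k i => if i = w₀ k then 1 else Real.exp (-l) with hg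
  have hg0 : ∀ k i, 0 ≤ g k i := by
    intro k i; simp only [hg]; split_ifs <;> positivity
  have hprod : ∀ w : Fin n → Fin m, ∏ k, g k (w k) = Real.exp (-l * hammingDist w w₀) := by
    intro w
    simp only [hg, Finset.prod_ite, Finset.prod_const_one, one_mul, Finset.prod_const]
    rw [← Real.exp_nat_mul, mul_comm, hammingDist]
  have hsum : ∀ k, ∑ i, g k i ≤ Real.exp (m * Real.exp (-l)) := by
    intro k
    have h1 : ∑ i, g k i ≤ ∑ i : Fin m, ((if i = w₀ k then 1 else 0) + Real.exp (-l)) := by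
      refine Finset.sum_le_sum fun i _ => ?_
      simp only [hg]
      split_ifs
      · linarith [Real.exp_pos (-l)]
      · simp
    refine h1.trans ?_
    rw [Finset.sum_add_distrib, Finset.sum_ite_eq' Finset.univ (w₀ k)]
    simp only [Finset.mem_univ, if_true, Finset.sum_const, Finset.card_univ, Fintype.card_fin,
      nsmul_eq_mul]
    linarith [Real.add_one_le_exp (m * Real.exp (-l))]
  have h1 : ((Finset.univ.filter fun w : Fin n → Fin m =>
      (hammingDist w w₀ : ℝ) ≤ n * a).card : ℝ)
      ≤ ∑ w : Fin n → Fin m, Real.exp (l * (n * a)) * ∏ k, g k (w k) := by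
    rw [Finset.card_filter, Nat.cast_sum]
    refine Finset.sum_le_sum fun w _ => ?_
    split_ifs with hw
    · rw [hprod, ← Real.exp_add, Nat.cast_one, Real.one_le_exp_iff]
      have := mul_le_mul_of_nonneg_left hw hl
      linarith
    · rw [Nat.cast_zero]
      exact mul_nonneg (Real.exp_pos _).le (Finset.prod_nonneg fun k _ => hg0 _ _)
  have h2 : ∑ w : Fin n → Fin m, ∏ k, g k (w k) = ∏ k, ∑ i, g k i := by
    rw [Finset.prod_univ_sum, Fintype.piFinset_univ]
  have h3 : ∏ k, ∑ i, g k i ≤ ∏ _k : Fin n, Real.exp (m * Real.exp (-l)) :=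
    Finset.prod_le_prod (fun k _ => Finset.sum_nonneg fun i _ => hg0 _ _) fun k _ => hsum k
  rw [Finset.prod_const, Finset.card_univ, Fintype.card_fin, ← Real.exp_nat_mul] at h3
  rw [← Finset.mul_sum, h2] at h1
  refine (h1.trans (mul_le_mul_of_nonneg_left h3 (Real.exp_pos _).le)).trans (le_of_eq ?_)
  rw [← Real.exp_add]
  congr 1; ring

/-- A form of Lusin's theorem: off a set of small measure, nearby points carry the same letter. -/
lemma exists_letter_eq [CompactSpace X] [MeasurableSpace X] [BorelSpace X] (μ : Measure X)
    [IsProbabilityMeasure μ] {m : ℕ} {ι : X → Fin m} (hι : Measurable ι) {a : ℝ} (ha : 0 < a) :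
    ∃ W : Set X, MeasurableSet W ∧ μ.real W < a ∧
      ∃ δ : ℝ, 0 < δ ∧ ∀ x ∉ W, ∀ y ∉ W, dist x y < δ → ι x = ι y := by
  have hb : (0 : ℝ) < a / (m + 1) := by positivity
  have hK : ∀ i : Fin m, ∃ K ⊆ ι ⁻¹' {i}, IsCompact K ∧
      μ (ι ⁻¹' {i} \ K) < ENNReal.ofReal (a / (m + 1)) := fun i =>
    (hι (measurableSet_singleton i)).exists_isCompact_sdiff_lt (measure_ne_top _ _)
      (ENNReal.ofReal_pos.2 hb).ne'
  choose K hKsub hKc hKμ using hK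
  refine ⟨(⋃ i, K i)ᶜ, (MeasurableSet.iUnion fun i => (hKc i).isClosed.measurableSet).compl, ?_, ?_⟩
  · have hsub : (⋃ i, K i)ᶜ ⊆ ⋃ i, (ι ⁻¹' {i} \ K i) := by
      intro x hx
      rw [mem_compl_iff, mem_iUnion, not_exists] at hx
      exact mem_iUnion.2 ⟨ι x, rfl, hx _⟩
    calc μ.real (⋃ i, K i)ᶜ ≤ μ.real (⋃ i, (ι ⁻¹' {i} \ K i)) := measureReal_mono hsub
      _ ≤ ∑ i, μ.real (ι ⁻¹' {i} \ K i) := measureReal_iUnion_fintype_le _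
      _ ≤ ∑ _i : Fin m, a / (m + 1) := Finset.sum_le_sum fun i _ => by
          rw [measureReal_def]
          exact ENNReal.toReal_le_of_le_ofReal hb.le (hKμ i).le
      _ < a := by
          rw [Finset.sum_const, Finset.card_univ, Fintype.card_fin, nsmul_eq_mul, ← mul_div_assoc,
            div_lt_iff₀ (by positivity)]
          nlinarith
  · have hpair : ∀ i j, ∀ᶠ δ in 𝓝[>] (0 : ℝ), i ≠ j → ∀ x ∈ K i, ∀ y ∈ K j, δ ≤ dist x y := by
      intro i j
      rcases eq_or_ne i j with rfl | hij
      · exact Eventually.of_forall fun _ h => absurd rfl h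
      have hd : Disjoint (K i) (K j) := Set.disjoint_left.2 fun x hx hy =>
        hij ((hKsub i hx).symm.trans (hKsub j hy))
      obtain ⟨r, hr, hdis⟩ := hd.exists_thickenings (hKc i) (hKc j).isClosed
      filter_upwards [Ioo_mem_nhdsGT hr] with δ hδ _ x hx y hy
      by_contra! hlt
      exact Set.disjoint_left.1 hdis
        (Metric.mem_thickening_iff.2 ⟨x, hx, by rw [dist_comm]; exact hlt.trans hδ.2⟩)
        (Metric.self_subset_thickening hr _ hy)
    obtain ⟨δ, h1, h2⟩ := ((eventually_all.2 fun i => eventually_all.2 fun j => hpair i j).and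
      self_mem_nhdsWithin).exists
    refine ⟨δ, h2, fun x hx y hy hxy => ?_⟩
    rw [mem_compl_iff, not_not, mem_iUnion] at hx hy
    obtain ⟨i, hi⟩ := hx
    obtain ⟨j, hj⟩ := hy
    rw [show ι x = i from hKsub i hi, show ι y = j from hKsub j hj]
    by_contra hij
    exact absurd hxy (not_lt.2 (h1 i j hij x hi y hj))

lemma exists_hamming_params (m : ℕ) {d : ℝ} (hd : 0 < d) :
    ∃ l a : ℝ, 0 ≤ l ∧ 0 < a ∧ l * a + m * Real.exp (-l) ≤ d := by
  have h : Tendsto (fun M : ℝ => m * Real.exp (-M)) atTop (𝓝 (m * 0)) :=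
    (Real.tendsto_exp_neg_atTop_nhds_zero).const_mul _
  rw [mul_zero] at h
  obtain ⟨l, h1, h2⟩ := ((h.eventually_lt_const (half_pos hd)).and (eventually_ge_atTop 0)).exists
  refine ⟨l, d / (2 * (l + 1)), h2, by positivity, ?_⟩
  have h3 : l * (d / (2 * (l + 1))) ≤ d / 2 := by
    rw [← mul_div_assoc, div_le_div_iff₀ (by positivity) (by positivity)]
    nlinarith
  linarith

section BowenBalls

variable [CompactSpace X] [MeasurableSpace X] [BorelSpace X] {μ : Measure X}
  [IsProbabilityMeasure μ] {f : X → X} {m : ℕ} {ι : X → Fin m}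

lemma exists_abs_le_of_continuous {v : X → ℝ} (hv : Continuous v) : ∃ C, ∀ x, |v x| ≤ C := by
  obtain ⟨C, hC⟩ := isCompact_univ.exists_bound_of_continuousOn hv.continuousOn
  exact ⟨C, fun x => hC x (mem_univ x)⟩

/-- The lower half of the Brin–Katok formula, with `n` replaced by `S_n v`.  Points of a Bowen ball
`B(x, n, δ)` that visit the exceptional set of `exists_letter_eq` rarely have `n`-words in one
Hamming ball, and each cylinder has measure about `exp (-n h)` by `exists_information`. -/
lemma exists_bowenBall_bound (hf : Continuous f) (herg : Ergodic f μ) (hι : Measurable ι)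
    {v : X → ℝ} (hv : Continuous v) (hpos : 0 < ∫ x, v x ∂μ) {s : ℝ}
    (hs : s * ∫ x, v x ∂μ < ⨅ n : ℕ, wordEnt μ f ι (n + 1) / (n + 1)) :
    ∃ δ : ℝ, 0 < δ ∧ ∃ (G : Set X) (N : ℕ), MeasurableSet G ∧ μ G ≠ 0 ∧
      ∀ (x : X) (n : ℕ), N ≤ n → ∀ s' ≤ s,
        μ (G ∩ bowenBall f x n δ) ≤ ENNReal.ofReal (Real.exp (-s' * birk f v n x)) := by
  classical
  have hmp := herg.toMeasurePreserving
  have hfm := hf.measurable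
  set I := ∫ x, v x ∂μ with hI
  set h := ⨅ n : ℕ, wordEnt μ f ι (n + 1) / (n + 1) with hh
  obtain ⟨d, hd⟩ : ∃ d, d = h - s * I := ⟨_, rfl⟩
  have hd0 : 0 < d := by linarith
  obtain ⟨ε, hε0, hεI, hεs⟩ : ∃ ε : ℝ, 0 < ε ∧ ε ≤ I ∧ |s| * ε ≤ d / 4 := by
    refine ⟨min I (d / (4 * (|s| + 1))), lt_min hpos (by positivity), min_le_left _ _, ?_⟩
    refine (mul_le_mul_of_nonneg_left (min_le_right _ _) (abs_nonneg s)).trans ?_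
    rw [← mul_div_assoc, div_le_div_iff₀ (by positivity) (by positivity)]
    nlinarith [abs_nonneg s]
  obtain ⟨ξ, M, hξm, hξb, hξI, hξw⟩ := exists_information hmp hι (ε := d / 4) (by linarith)
  rw [← hh] at hξI
  obtain ⟨l, a, hl, ha, hla⟩ := exists_hamming_params m (d := d / 4) (by linarith)
  obtain ⟨W, hWm, hWa, δ₁, hδ₁, hW⟩ := exists_letter_eq μ hι (half_pos ha)
  obtain ⟨δ₂, hδ₂, hvδ⟩ := Metric.uniformContinuous_iff.1
    (CompactSpace.uniformContinuous_of_continuous hv) (ε / 2) (half_pos hε0)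
  obtain ⟨C, hC⟩ := exists_abs_le_of_continuous hv
  set χ : X → ℝ := W.indicator fun _ => 1 with hχ
  have hχm : Measurable χ := measurable_const.indicator hWm
  have hχ0 : ∀ x, 0 ≤ χ x := fun x => indicator_nonneg (fun _ _ => zero_le_one) _
  have hχb : ∀ x, |χ x| ≤ 1 := fun x => by
    rw [abs_of_nonneg (hχ0 x)]; exact indicator_le_self' (fun _ _ => zero_le_one) _
  have hχI : ∫ x, χ x ∂μ < a / 2 := by
    rw [hχ, integral_indicator hWm]
    simpa using hWa
  set G : ℕ → Set X := fun N => {x | ∀ n ≥ N, (n * (I - ε / 2) ≤ birk f v n x ∧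
    birk f v n x ≤ n * (I + ε / 2)) ∧ n * (h - d / 2) ≤ birk f ξ n x ∧
    birk f χ n x ≤ n * (a / 2)} with hG
  have hGm : ∀ N, MeasurableSet (G N) := by
    intro N
    have : G N = ⋂ n, ⋂ (_ : n ≥ N), (({x | n * (I - ε / 2) ≤ birk f v n x} ∩
        {x | birk f v n x ≤ n * (I + ε / 2)}) ∩ ({x | n * (h - d / 2) ≤ birk f ξ n x} ∩
        {x | birk f χ n x ≤ n * (a / 2)})) := by
      ext x; simp [hG]
    rw [this]
    have hvm := fun n => measurable_birk hfm hv.measurable n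
    have hξm := fun n => measurable_birk hfm hξm n
    have hχm := fun n => measurable_birk hfm hχm n
    refine MeasurableSet.iInter fun n => MeasurableSet.iInter fun _ => ?_
    exact ((measurableSet_le measurable_const (hvm n)).inter
      (measurableSet_le (hvm n) measurable_const)).inter
      ((measurableSet_le measurable_const (hξm n)).inter
      (measurableSet_le (hχm n) measurable_const))
  obtain ⟨N, hN⟩ : ∃ N, μ (G N) ≠ 0 := by
    by_contra! hcon
    have h0 : μ (⋃ N, G N) = 0 := measure_iUnion_null hcon
    have h1 : ∀ᵐ x ∂μ, x ∈ ⋃ N, G N := by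
      filter_upwards [ae_birk_ge herg hv.measurable hC (c := I - ε / 2) (by linarith),
        ae_birk_le herg hv.measurable hC (c := I + ε / 2) (by linarith),
        ae_birk_ge herg hξm hξb (c := h - d / 2) (by linarith),
        ae_birk_le herg hχm hχb hχI] with x h1 h2 h3 h4
      obtain ⟨N1, h1⟩ := h1
      obtain ⟨N2, h2⟩ := h2
      obtain ⟨N3, h3⟩ := h3
      obtain ⟨N4, h4⟩ := h4
      refine mem_iUnion.2 ⟨max (max N1 N2) (max N3 N4), fun n hn => ?_⟩
      simp only [ge_iff_le, max_le_iff] at hn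
      exact ⟨⟨h1 n hn.1.1, h2 n hn.1.2⟩, h3 n hn.2.1, h4 n hn.2.2⟩
    have h2 := measure_eq_zero_iff_ae_notMem.1 h0
    obtain ⟨x, hx1, hx2⟩ := (h1.and h2).exists
    exact hx2 hx1
  have hcyl : ∀ n ≥ N, ∀ w : Fin n → Fin m,
      μ.real (G N ∩ {x | word f ι n x = w}) ≤ Real.exp (-(n * (h - d / 2))) := by
    intro n hn w
    have hwm : MeasurableSet {x | word f ι n x = w} :=
      measurable_word hfm hι n (measurableSet_singleton w)
    have hAm := (hGm N).inter hwm
    have hint : Integrable ({x | word f ι n x = w}.indicator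
        (fun x => Real.exp (birk f ξ n x))) μ := by
      refine integrable_of_bdd ((Real.measurable_exp.comp (measurable_birk hfm hξm n)).indicator
        hwm) (C := Real.exp (n * M)) fun x => ?_
      rw [abs_of_nonneg (indicator_nonneg (fun _ _ => (Real.exp_pos _).le) _)]
      refine (indicator_le_self' (fun _ _ => (Real.exp_pos _).le) _).trans (Real.exp_le_exp.2 ?_)
      have := Finset.sum_le_card_nsmul (Finset.range n) (fun k => ξ (f^[k] x)) M
        (fun k _ => (abs_le.1 (hξb _)).2)
      simpa [birk] using this
    have h1 : ∫ x, (G N ∩ {x | word f ι n x = w}).indicator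
        (fun _ => Real.exp (n * (h - d / 2))) x ∂μ ≤ 1 := by
      refine (integral_mono ((integrable_const _).indicator hAm) hint fun x => ?_).trans (hξw n w)
      by_cases hx : x ∈ G N ∩ {x | word f ι n x = w}
      · rw [indicator_of_mem hx, indicator_of_mem hx.2]
        exact Real.exp_le_exp.2 (hx.1 n hn).2.1
      · rw [indicator_of_notMem hx]
        exact indicator_nonneg (fun _ _ => (Real.exp_pos _).le) _
    rw [integral_indicator hAm, setIntegral_const, smul_eq_mul] at h1
    rw [Real.exp_neg, ← one_div, le_div_iff₀ (Real.exp_pos _)]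
    exact h1
  refine ⟨min (δ₁ / 2) δ₂, by positivity, G N, N, hGm N, hN, ?_⟩
  intro x n hn s' hs'
  rcases (G N ∩ bowenBall f x n (min (δ₁ / 2) δ₂)).eq_empty_or_nonempty with he | ⟨y, hyG, hyB⟩
  · rw [he, measure_empty]; exact zero_le
  have hS : |birk f v n x - birk f v n y| ≤ n * (ε / 2) := by
    simp only [birk]
    rw [← Finset.sum_sub_distrib]
    refine (Finset.abs_sum_le_sum_abs _ _).trans ?_
    have := Finset.sum_le_card_nsmul (Finset.range n)
      (fun k => |v (f^[k] x) - v (f^[k] y)|) (ε / 2) (fun k hk => by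
        have := hvδ ((hyB k (Finset.mem_range.1 hk)).trans_le (min_le_right _ _))
        rw [Real.dist_eq] at this
        exact this.le)
    simpa using this
  rw [abs_le] at hS
  have hn0 : (0 : ℝ) ≤ n := Nat.cast_nonneg n
  obtain ⟨⟨hy1, hy2⟩, -, hy4⟩ := hyG n hn
  have hS1 : n * (I - ε) ≤ birk f v n x := by linarith
  have hS2 : birk f v n x ≤ n * (I + ε) := by linarith
  have hS0 : 0 ≤ birk f v n x := (mul_nonneg hn0 (by linarith)).trans hS1
  have hsS : s' * birk f v n x ≤ n * (h - 3 * d / 4) := by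
    refine (mul_le_mul_of_nonneg_right hs' hS0).trans ?_
    have h1 : s * (birk f v n x - n * I) ≤ |s| * (n * ε) := by
      refine (le_abs_self _).trans ?_
      rw [abs_mul]
      refine mul_le_mul_of_nonneg_left ?_ (abs_nonneg s)
      rw [abs_le]; constructor <;> linarith
    have h2 : n * (|s| * ε) ≤ n * (d / 4) := mul_le_mul_of_nonneg_left hεs hn0
    have h3 : h = d + s * I := by linarith
    rw [h3]
    nlinarith
  -- the words of points of the intersection lie in the Hamming ball around the word of `y`
  have hsub : G N ∩ bowenBall f x n (min (δ₁ / 2) δ₂) ⊆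
      ⋃ w ∈ Finset.univ.filter fun w : Fin n → Fin m =>
        (hammingDist w (word f ι n y) : ℝ) ≤ n * a, (G N ∩ {x | word f ι n x = w}) := by
    rintro z ⟨hzG, hzB⟩
    simp only [mem_iUnion, exists_prop]
    refine ⟨word f ι n z, Finset.mem_filter.2 ⟨Finset.mem_univ _, ?_⟩, hzG, rfl⟩
    have hz4 := (hzG n hn).2.2
    have hle : (hammingDist (word f ι n z) (word f ι n y) : ℝ) ≤ birk f χ n z + birk f χ n y := by
      simp only [birk]
      rw [← Finset.sum_add_distrib, Finset.sum_range fun k => χ (f^[k] z) + χ (f^[k] y),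
        hammingDist, Finset.card_filter, Nat.cast_sum]
      refine Finset.sum_le_sum fun k _ => ?_
      by_cases hk : word f ι n z k = word f ι n y k
      · simp only [hk, ne_eq, not_true_eq_false, if_false, Nat.cast_zero]
        exact add_nonneg (hχ0 _) (hχ0 _)
      · simp only [ne_eq, hk, not_false_eq_true, if_true, Nat.cast_one]
        by_contra! hlt
        have hmem : ∀ t, χ t < 1 → t ∉ W := by
          intro t ht htW
          rw [hχ, indicator_of_mem htW] at ht
          exact lt_irrefl _ ht
        refine hk (hW _ (hmem _ ?_) _ (hmem _ ?_) ?_)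
        · linarith [hχ0 (f^[(k : ℕ)] y)]
        · linarith [hχ0 (f^[(k : ℕ)] z)]
        · have h1 := (hyB k k.2).trans_le (min_le_left _ _)
          have h2 := (hzB k k.2).trans_le (min_le_left _ _)
          rw [dist_comm] at h2
          linarith [dist_triangle (f^[(k : ℕ)] z) (f^[(k : ℕ)] x) (f^[(k : ℕ)] y)]
    linarith
  rw [← ENNReal.ofReal_toReal (measure_ne_top μ _)]
  refine ENNReal.ofReal_le_ofReal ?_
  calc μ.real (G N ∩ bowenBall f x n (min (δ₁ / 2) δ₂)) ≤ _ :=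
        measureReal_mono hsub (measure_ne_top _ _)
    _ ≤ ∑ w ∈ Finset.univ.filter fun w : Fin n → Fin m =>
        (hammingDist w (word f ι n y) : ℝ) ≤ n * a, μ.real (G N ∩ {x | word f ι n x = w}) :=
        measureReal_biUnion_finset_le _ _
    _ ≤ ∑ w ∈ Finset.univ.filter fun w : Fin n → Fin m =>
        (hammingDist w (word f ι n y) : ℝ) ≤ n * a, Real.exp (-(n * (h - d / 2))) :=
        Finset.sum_le_sum fun w _ => hcyl n hn w
    _ ≤ Real.exp (n * (d / 4)) * Real.exp (-(n * (h - d / 2))) := by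
        rw [Finset.sum_const, nsmul_eq_mul]
        refine mul_le_mul_of_nonneg_right ?_ (Real.exp_pos _).le
        exact (card_hamming_le _ hl).trans
          (Real.exp_le_exp.2 (mul_le_mul_of_nonneg_left hla hn0))
    _ ≤ Real.exp (-s' * birk f v n x) := by
        rw [← Real.exp_add, Real.exp_le_exp]
        nlinarith

/-- The mass distribution principle applied to `exists_bowenBall_bound`. -/
lemma exists_mU_ne_zero (hf : Continuous f) (herg : Ergodic f μ) (hι : Measurable ι)
    {v : X → ℝ} (hv : Continuous v) (hpos : 0 < ∫ x, v x ∂μ) {s : ℝ}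
    (hs : s * ∫ x, v x ∂μ < ⨅ n : ℕ, wordEnt μ f ι (n + 1) / (n + 1)) :
    ∃ δ : ℝ, 0 < δ ∧ ∀ Z : Set X, μ Z = 1 → ∀ s' ≤ s, mU f v Z s' δ ≠ 0 := by
  obtain ⟨δ, hδ, G, N, hGm, hG0, hG⟩ := exists_bowenBall_bound hf herg hι hv hpos hs
  refine ⟨δ, hδ, fun Z hZ s' hs' h0 => ?_⟩
  have hZG : μ (Z ∩ G) ≠ 0 := by
    intro hz
    have h1 := measure_inter_add_sdiff Z hGm (μ := μ)
    rw [hz, zero_add, hZ] at h1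
    have h2 : (1 : ℝ≥0∞) ≤ μ Gᶜ := h1 ▸ measure_mono fun x hx => hx.2
    rw [prob_compl_eq_one_sub hGm] at h2
    exact absurd h2 (not_le.2 (ENNReal.sub_lt_self ENNReal.one_ne_top one_ne_zero hG0))
  have hle : μ (Z ∩ G) ≤ mU f v Z s' δ := by
    unfold mU
    refine le_iSup_of_le N (le_iInf₂ fun E hE => ?_)
    obtain ⟨hEc, hEN, hEZ⟩ := hE
    have hsub : Z ∩ G ⊆ ⋃ p ∈ E, (G ∩ bowenBall f p.1 p.2 δ) := by
      rintro x ⟨hxZ, hxG⟩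
      obtain ⟨p, hp, hx⟩ := mem_iUnion₂.1 (hEZ hxZ)
      exact mem_iUnion₂.2 ⟨p, hp, hxG, hx⟩
    refine (measure_mono hsub).trans ((measure_biUnion_le μ hEc _).trans ?_)
    exact ENNReal.tsum_le_tsum fun p => hG _ _ (hEN _ p.2).2 _ hs'
  exact hZG (le_antisymm (hle.trans h0.le) zero_le)

lemma le_dimu_of_lt (hf : Continuous f) (herg : Ergodic f μ) (hι : Measurable ι)
    {v : X → ℝ} (hv : Continuous v) (hpos : 0 < ∫ x, v x ∂μ) {s : ℝ}
    (hs : s * ∫ x, v x ∂μ < ⨅ n : ℕ, wordEnt μ f ι (n + 1) / (n + 1)) {Z : Set X}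
    (hZ : μ Z = 1) : (s : EReal) ≤ dimu f v Z := by
  obtain ⟨δ, hδ, hne⟩ := exists_mU_ne_zero hf herg hι hv hpos hs
  refine le_trans (le_sInf ?_) (le_iSup₂ (f := fun δ (_ : 0 < δ) => dimuAt f v Z δ) δ hδ)
  rintro _ ⟨s', hs', rfl⟩
  refine EReal.coe_le_coe_iff.2 (le_of_not_ge fun h => hne Z hZ s' h hs')

end BowenBalls

/-! ### Partitions and their index maps -/

section IndexMaps

variable [MeasurableSpace X] {μ : Measure X} [IsProbabilityMeasure μ] {f : X → X}

lemma exists_indexMap {m : ℕ} {P : Fin m → Set X} (hP : IsFinPartition P) :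
    ∃ ι : X → Fin m, Measurable ι ∧ P = fun i => ι ⁻¹' {i} := by
  obtain ⟨hm, hd, hu⟩ := hP
  have h : ∀ x, ∃ i, x ∈ P i := fun x => mem_iUnion.1 (hu ▸ mem_univ x)
  choose ι hι using h
  have hPι : P = fun i => ι ⁻¹' {i} := by
    funext i
    ext x
    refine ⟨fun hx => ?_, fun hx => ?_⟩
    · by_contra hne
      exact Set.disjoint_left.1 (hd _ _ hne) (hι x) hx
    · have : ι x = i := hx
      exact this ▸ hι x
  refine ⟨ι, measurable_to_countable' fun i => ?_, hPι⟩
  have := hm i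
  rwa [hPι] at this

lemma isFinPartition_indexMap {m : ℕ} {ι : X → Fin m} (hι : Measurable ι) :
    IsFinPartition fun i => ι ⁻¹' {i} := by
  refine ⟨fun i => hι (measurableSet_singleton i), fun i j hij => ?_, ?_⟩
  · exact Set.disjoint_left.2 fun x hx hy => hij (Eq.trans (Eq.symm hx) hy)
  · exact eq_univ_of_forall fun x => mem_iUnion.2 ⟨ι x, rfl⟩

lemma partEnt_orbitJoin {m : ℕ} (ι : X → Fin m) (n : ℕ) :
    partEnt μ (orbitJoin f (fun i => ι ⁻¹' {i}) n) = wordEnt μ f ι n := by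
  have h : ∀ w, orbitJoin f (fun i => ι ⁻¹' {i}) n w = {x | word f ι n x = w} := by
    intro w
    ext x
    simp [orbitJoin, word, funext_iff]
  unfold partEnt wordEnt
  refine Finset.sum_congr rfl fun w _ => ?_
  rw [h, Real.negMulLog, wp, measureReal_def, neg_mul]

lemma wordRate_nonneg {m : ℕ} (ι : X → Fin m) :
    0 ≤ ⨅ n : ℕ, wordEnt μ f ι (n + 1) / (n + 1) :=
  Real.iInf_nonneg fun n => div_nonneg (wordEnt_nonneg μ f ι _) (by positivity)

lemma kolSinai_le {C : ℝ} (hC : 0 ≤ C) (h : ∀ (m : ℕ) (ι : X → Fin m), Measurable ι →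
    ⨅ n : ℕ, wordEnt μ f ι (n + 1) / (n + 1) ≤ C) : kolSinai f μ ≤ C := by
  unfold kolSinai
  refine Real.iSup_le (fun m => Real.iSup_le (fun P => Real.iSup_le (fun hP => ?_) hC) hC) hC
  obtain ⟨ι, hι, rfl⟩ := exists_indexMap hP
  simp only [partEnt_orbitJoin]
  exact h m ι hι

lemma wordRate_le_kolSinai {B : ℝ} (hB : ∀ (m : ℕ) (ι : X → Fin m), Measurable ι →
    ⨅ n : ℕ, wordEnt μ f ι (n + 1) / (n + 1) ≤ B) {m : ℕ} {ι : X → Fin m} (hι : Measurable ι) :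
    ⨅ n : ℕ, wordEnt μ f ι (n + 1) / (n + 1) ≤ kolSinai f μ := by
  have hB0 : 0 ≤ max B 0 := le_max_right _ _
  have h1 : ∀ (m : ℕ) (P : Fin m → Set X), IsFinPartition P →
      ⨅ n : ℕ, partEnt μ (orbitJoin f P (n + 1)) / (n + 1) ≤ max B 0 := by
    intro m P hP
    obtain ⟨ι, hι, rfl⟩ := exists_indexMap hP
    simp only [partEnt_orbitJoin]
    exact (hB m ι hι).trans (le_max_left _ _)
  have h2 : ∀ (m : ℕ) (P : Fin m → Set X), ⨆ _ : IsFinPartition P,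
      ⨅ n : ℕ, partEnt μ (orbitJoin f P (n + 1)) / (n + 1) ≤ max B 0 :=
    fun m P => Real.iSup_le (h1 m P) hB0
  have h3 : ∀ m : ℕ, ⨆ (P : Fin m → Set X) (_ : IsFinPartition P),
      ⨅ n : ℕ, partEnt μ (orbitJoin f P (n + 1)) / (n + 1) ≤ max B 0 :=
    fun m => Real.iSup_le (h2 m) hB0
  have hP := isFinPartition_indexMap hι
  have e : ⨅ n : ℕ, wordEnt μ f ι (n + 1) / (n + 1) = ⨆ _ : IsFinPartition fun i => ι ⁻¹' {i},
      ⨅ n : ℕ, partEnt μ (orbitJoin f (fun i => ι ⁻¹' {i}) (n + 1)) / (n + 1) := by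
    rw [ciSup_pos hP]
    simp only [partEnt_orbitJoin]
  rw [e, kolSinai]
  refine le_trans ?_ (le_ciSup (f := fun m : ℕ => ⨆ (P : Fin m → Set X) (_ : IsFinPartition P),
    ⨅ n : ℕ, partEnt μ (orbitJoin f P (n + 1)) / (n + 1)) ⟨max B 0, ?_⟩ m)
  · refine le_ciSup (f := fun P : Fin m → Set X => ⨆ _ : IsFinPartition P,
      ⨅ n : ℕ, partEnt μ (orbitJoin f P (n + 1)) / (n + 1)) ⟨max B 0, ?_⟩ _
    rintro _ ⟨P, rfl⟩
    exact h2 m P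
  · rintro _ ⟨m, rfl⟩
    exact h3 m

end IndexMaps

section Compact

variable [CompactSpace X] [MeasurableSpace X] [BorelSpace X] {μ : Measure X}
  [IsProbabilityMeasure μ] {f : X → X}

/-- The inequality `h_μ ≤ h_top` of the variational principle, which makes the supremum defining
`kolSinai` a genuine one.  Topological entropy is the `u`-dimension of `X` for `u = 1`. -/
lemma exists_wordRate_le (hf : Continuous f) (herg : Ergodic f μ) (hfin : FiniteHtop f) :
    ∃ B : ℝ, ∀ (m : ℕ) (ι : X → Fin m), Measurable ι →
      ⨅ n : ℕ, wordEnt μ f ι (n + 1) / (n + 1) ≤ B := by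
  have hmP : ∀ s δ, mP f univ s (fun _ => 0) δ = mU f (fun _ => 1) univ s δ := by
    intro s δ
    have hw : (fun p : X × ℕ => -(p.2 : ℝ) * s + birk f (fun _ => 0) p.2 p.1)
        = fun p => -s * birk f (fun _ => 1) p.2 p.1 := by
      funext p
      simp [birk, mul_comm]
    unfold mP mU
    rw [hw]
  have hdim : pressure f univ (fun _ => 0) = dimu f (fun _ => 1) univ := by
    unfold pressure dimu pressureAt dimuAt
    simp only [hmP]
  refine ⟨(pressure f univ fun _ => 0).toReal, fun m ι hι => ?_⟩
  by_contra! hlt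
  obtain ⟨s, hs1, hs2⟩ := exists_between hlt
  have h1 : (s : EReal) ≤ dimu f (fun _ => 1) univ :=
    le_dimu_of_lt hf herg hι continuous_const (by simp) (by simpa using hs2) measure_univ
  rw [← hdim] at h1
  exact absurd (EReal.coe_le_coe_iff.1 (h1.trans (EReal.le_coe_toReal hfin))) (not_le.2 hs1)

lemma exists_small_letters [Nonempty X] {δ : ℝ} (hδ : 0 < δ) :
    ∃ (m : ℕ) (ι : X → Fin m), Measurable ι ∧ ∀ x y, ι x = ι y → dist x y < δ := by
  set e := TopologicalSpace.denseSeq X with he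
  have hcov : (univ : Set X) ⊆ ⋃ k, Metric.ball (e k) (δ / 2) := by
    intro x _
    obtain ⟨k, hk⟩ := (TopologicalSpace.denseRange_denseSeq X).exists_dist_lt x (half_pos hδ)
    exact mem_iUnion.2 ⟨k, hk⟩
  obtain ⟨t, ht⟩ := isCompact_univ.elim_finite_subcover _ (fun k => Metric.isOpen_ball) hcov
  set N := t.sup id with hN
  have hnear : ∀ x, dist (SimpleFunc.nearestPt e N x) x < δ / 2 := by
    intro x
    obtain ⟨k, hk, hx⟩ := mem_iUnion₂.1 (ht (mem_univ x))
    have h1 := SimpleFunc.edist_nearestPt_le e x (Finset.le_sup (f := id) hk : k ≤ N)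
    rw [edist_dist, edist_dist, ENNReal.ofReal_le_ofReal_iff dist_nonneg] at h1
    rw [Metric.mem_ball, dist_comm] at hx
    exact h1.trans_lt hx
  refine ⟨N + 1, fun x => ⟨SimpleFunc.nearestPtInd e N x,
    Nat.lt_succ_of_le (SimpleFunc.nearestPtInd_le e N x)⟩, ?_, fun x y hxy => ?_⟩
  · refine measurable_to_countable' fun i => ?_
    have : (fun x => (⟨SimpleFunc.nearestPtInd e N x,
        Nat.lt_succ_of_le (SimpleFunc.nearestPtInd_le e N x)⟩ : Fin (N + 1))) ⁻¹' {i}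
        = SimpleFunc.nearestPtInd e N ⁻¹' {(i : ℕ)} := by
      ext x; simp [Fin.ext_iff]
    rw [this]
    exact SimpleFunc.measurableSet_fiber _ _
  · have h1 : SimpleFunc.nearestPt e N x = SimpleFunc.nearestPt e N y :=
      congrArg e (Fin.ext_iff.1 hxy)
    have h2 := hnear x
    have h3 := hnear y
    rw [h1, dist_comm] at h2
    linarith [dist_triangle x (SimpleFunc.nearestPt e N y) y]

/-! ### Economical covers of a set of full measure -/

lemma mU_antitone (f : X → X) (u : X → ℝ) (Z : Set X) (s : ℝ) {δ δ' : ℝ} (h : δ ≤ δ') :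
    mU f u Z s δ' ≤ mU f u Z s δ := by
  unfold mU
  refine iSup_mono fun N => le_iInf₂ fun E hE => iInf₂_le_of_le E ⟨hE.1, hE.2.1, ?_⟩ le_rfl
  exact hE.2.2.trans (iUnion₂_mono fun p _ y hy k hk => (hy k hk).trans_le h)

/-- Typical points have at most about `exp (n t)` words of length `j + n`, and points with the same
word lie in a common Bowen ball of order `n`.  As `S_n u ≥ n c` there, the corresponding cover has
weighted sum about `exp (-n (s c - t))`. -/
lemma exists_full_measure_set (herg : Ergodic f μ) {u : X → ℝ} (hu : Continuous u) {m : ℕ}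
    {ι : X → Fin m} (hι : Measurable ι) {δ : ℝ} (hδ : ∀ x y, ι x = ι y → dist x y < δ)
    {s t c : ℝ} (hs : 0 < s) (hc : c < ∫ x, u x ∂μ) (htc : t < s * c)
    (ht : ⨅ n : ℕ, wordEnt μ f ι (n + 1) / (n + 1) < t) :
    ∃ Y : Set X, (∀ᵐ x ∂μ, x ∈ Y) ∧ ∀ Z ⊆ Y, mU f u Z s δ = 0 := by
  classical
  obtain ⟨j, G, hG, hcard⟩ := exists_typical_words herg hι ht
  obtain ⟨C, hC⟩ := exists_abs_le_of_continuous hu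
  set A : ℕ × ℕ → Set X := fun p => G p.1 ∩ {x | ∀ n ≥ p.2, n * c ≤ birk f u n x} with hA
  refine ⟨⋃ p, A p, ?_, fun Z hZ => ?_⟩
  · filter_upwards [hG, ae_birk_ge herg hu.measurable hC hc] with x ⟨N₁, h1⟩ ⟨N₂, h2⟩
    exact mem_iUnion.2 ⟨(N₁, N₂), h1, h2⟩
  have hpiece : ∀ (N : ℕ) (p : ℕ × ℕ) (η : NNReal), 0 < η → ∃ E : Set (X × ℕ), E.Countable ∧
      (∀ q ∈ E, q.1 ∈ Z ∧ N ≤ q.2) ∧ Z ∩ A p ⊆ ⋃ q ∈ E, bowenBall f q.1 q.2 δ ∧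
      coverSum E (fun q => -s * birk f u q.2 q.1) ≤ η := by
    intro N p η hη
    obtain ⟨n, hn1, hn2⟩ : ∃ n : ℕ, (m : ℝ) ^ j * Real.exp (-(n * (s * c - t))) < η ∧
        max N (max p.1 p.2) ≤ n := by
      have h1 : Tendsto (fun n : ℕ => (n : ℝ) * (s * c - t)) atTop atTop :=
        tendsto_natCast_atTop_atTop.atTop_mul_const (by linarith)
      have h2 := ((Real.tendsto_exp_neg_atTop_nhds_zero.comp h1).const_mul ((m : ℝ) ^ j))
      rw [mul_zero] at h2
      exact ((h2.eventually_lt_const (NNReal.coe_pos.2 hη)).and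
        (eventually_ge_atTop (max N (max p.1 p.2)))).exists
    simp only [max_le_iff] at hn2
    obtain ⟨hnN, hnp1, hnp2⟩ := hn2
    set T : Finset (Fin (j + n) → Fin m) :=
      Finset.univ.filter fun w => ∃ x ∈ Z ∩ A p, word f ι (j + n) x = w with hT
    have hTex : ∀ w : T, ∃ x ∈ Z ∩ A p, word f ι (j + n) x = w :=
      fun w => (Finset.mem_filter.1 w.2).2
    choose g hgA hgw using hTex
    have hTcard : (T.card : ℝ) ≤ (m : ℝ) ^ j * Real.exp (n * t) := by
      refine hcard p.1 n hnp1 T fun w hw => ?_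
      obtain ⟨x, hx, hxw⟩ := (Finset.mem_filter.1 hw).2
      exact ⟨x, hx.2.1, hxw⟩
    refine ⟨range fun w : T => (g w, n), countable_range _, ?_, ?_, ?_⟩
    · rintro _ ⟨w, rfl⟩
      exact ⟨(hgA w).1, hnN⟩
    · intro x hx
      have hxT : word f ι (j + n) x ∈ T := Finset.mem_filter.2 ⟨Finset.mem_univ _, x, hx, rfl⟩
      refine mem_iUnion₂.2 ⟨_, ⟨⟨_, hxT⟩, rfl⟩, fun k hk => hδ _ _ ?_⟩
      exact congrFun (hgw ⟨_, hxT⟩) ⟨k, by lia⟩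
    · have hbd : ∀ w : T, ENNReal.ofReal (Real.exp (-s * birk f u n (g w)))
          ≤ ENNReal.ofReal (Real.exp (-s * (n * c))) := by
        intro w
        refine ENNReal.ofReal_le_ofReal (Real.exp_le_exp.2 ?_)
        have := mul_le_mul_of_nonneg_left ((hgA w).2.2 n hnp2) hs.le
        linarith
      calc coverSum (range fun w : T => (g w, n)) (fun q => -s * birk f u q.2 q.1)
          ≤ ∑' w : T, ENNReal.ofReal (Real.exp (-s * birk f u n (g w))) :=
            ENNReal.tsum_le_tsum_comp_of_surjective
              (f := rangeFactorization fun w : T => (g w, n)) rangeFactorization_surjective _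
        _ ≤ ∑' _w : T, ENNReal.ofReal (Real.exp (-s * (n * c))) := ENNReal.tsum_le_tsum hbd
        _ = ENNReal.ofReal (T.card * Real.exp (-s * (n * c))) := by
            rw [tsum_fintype, Finset.sum_const, nsmul_eq_mul, ENNReal.ofReal_mul (by positivity),
              ENNReal.ofReal_natCast]
            simp
        _ ≤ ENNReal.ofReal η := by
            refine ENNReal.ofReal_le_ofReal (le_trans ?_ hn1.le)
            refine (mul_le_mul_of_nonneg_right hTcard (Real.exp_pos _).le).trans (le_of_eq ?_)
            rw [mul_assoc, ← Real.exp_add]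
            congr 2; ring
        _ = η := ENNReal.ofReal_coe_nnreal
  unfold mU
  refine le_antisymm (iSup_le fun N => ?_) zero_le
  refine le_of_forall_gt fun η hη => ?_
  obtain ⟨η', hη'pos, hη'⟩ := ENNReal.exists_pos_sum_of_countable hη.ne' (ℕ × ℕ)
  choose E hEc hEN hEcov hEsum using fun p => hpiece N p (η' p) (hη'pos p)
  refine lt_of_le_of_lt ?_ hη'
  refine iInf₂_le_of_le (⋃ p, E p) ⟨countable_iUnion hEc, ?_, ?_⟩ ?_
  · intro q hq
    obtain ⟨p, hp⟩ := mem_iUnion.1 hq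
    exact hEN p q hp
  · intro x hx
    obtain ⟨p, hp⟩ := mem_iUnion.1 (hZ hx)
    obtain ⟨q, hq, hxq⟩ := mem_iUnion₂.1 (hEcov p ⟨hx, hp⟩)
    exact mem_iUnion₂.2 ⟨q, mem_iUnion.2 ⟨p, hq⟩, hxq⟩
  · exact (ENNReal.tsum_iUnion_le_tsum (fun q : X × ℕ =>
      ENNReal.ofReal (Real.exp (-s * birk f u q.2 q.1))) E).trans (ENNReal.tsum_le_tsum hEsum)

lemma dimuMeas_le (hf : Continuous f) (herg : Ergodic f μ) (hfin : FiniteHtop f) {u : X → ℝ}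
    (hu : Continuous u) (hpos : 0 < ∫ x, u x ∂μ) {s : ℝ}
    (hs : kolSinai f μ / ∫ x, u x ∂μ < s) : dimuMeas f u μ ≤ s := by
  have hne : Nonempty X := nonempty_of_isProbabilityMeasure μ
  obtain ⟨B, hB⟩ := exists_wordRate_le hf herg hfin
  have hk0 : 0 ≤ kolSinai f μ :=
    (wordRate_nonneg (fun _ => (0 : Fin 1))).trans (wordRate_le_kolSinai hB measurable_const)
  have hs0 : 0 < s := (div_nonneg hk0 hpos.le).trans_lt hs
  obtain ⟨c, hc1, hc2⟩ : ∃ c, kolSinai f μ / s < c ∧ c < ∫ x, u x ∂μ :=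
    exists_between ((div_lt_comm₀ hpos hs0).1 hs)
  obtain ⟨t, ht1, ht2⟩ := exists_between ((div_lt_iff₀' hs0).1 hc1)
  have hY : ∀ l : ℕ, ∃ Y : Set X, (∀ᵐ x ∂μ, x ∈ Y) ∧
      ∀ Z ⊆ Y, mU f u Z s (1 / ((l : ℝ) + 1)) = 0 := by
    intro l
    obtain ⟨m, ι, hι, hδ⟩ := exists_small_letters (X := X) (δ := 1 / ((l : ℝ) + 1))
      Nat.one_div_pos_of_nat
    exact exists_full_measure_set herg hu hι hδ hs0 hc2 ht2
      ((wordRate_le_kolSinai hB hι).trans_lt ht1)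
  choose Y hYae hYm using hY
  have hZ : μ (⋂ l, Y l) = 1 := by
    have h : ∀ᵐ x ∂μ, x ∈ ⋂ l, Y l := by
      filter_upwards [ae_all_iff.2 hYae] with x hx
      exact mem_iInter.2 hx
    exact (measure_congr (eventuallyEq_univ.2 h)).trans measure_univ
  refine (sInf_le ⟨_, hZ, rfl⟩ : dimuMeas f u μ ≤ dimu f u (⋂ l, Y l)).trans ?_
  refine iSup₂_le fun δ hδ => sInf_le ⟨s, ?_, rfl⟩
  obtain ⟨l, hl⟩ := exists_nat_one_div_lt hδ
  refine le_antisymm ((mU_antitone f u _ s hl.le).trans ?_) zero_le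
  exact (hYm l _ (iInter_subset _ l)).le

lemma le_dimuMeas (hf : Continuous f) (herg : Ergodic f μ) {u : X → ℝ}
    (hu : Continuous u) (hpos : 0 < ∫ x, u x ∂μ) :
    ((kolSinai f μ / ∫ x, u x ∂μ : ℝ) : EReal) ≤ dimuMeas f u μ := by
  refine le_sInf ?_
  rintro _ ⟨Z, hZ, rfl⟩
  by_contra! hlt
  obtain ⟨c, hc1, hc2⟩ := EReal.lt_iff_exists_real_btwn.1 hlt
  have hle : ∀ (m : ℕ) (ι : X → Fin m), Measurable ι →
      ⨅ n : ℕ, wordEnt μ f ι (n + 1) / (n + 1) ≤ c * ∫ x, u x ∂μ := by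
    intro m ι hι
    by_contra! h
    exact absurd (le_dimu_of_lt hf herg hι hu hpos h hZ) (not_le.2 hc1)
  have h0 : 0 ≤ c * ∫ x, u x ∂μ :=
    (wordRate_nonneg (fun _ => (0 : Fin 1))).trans (hle 1 _ measurable_const)
  have h1 := (div_le_iff₀ hpos).2 (kolSinai_le h0 hle)
  exact absurd (EReal.coe_lt_coe_iff.1 hc2) (not_lt.2 h1)

end Compact

/-- u-dimension of an ergodic measure.
Let `u ∈ C(X)` satisfy property (P).  For every ergodic `f`-invariant Borel probability
measure `μ` with `∫ u dμ > 0`, the `u`-dimension of `μ` is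
`dim_u μ = h_μ(f) / ∫ u dμ`. -/
theorem dimu_ergodic_measure {X : Type*} [MetricSpace X] [CompactSpace X]
    [MeasurableSpace X] [BorelSpace X]
    (f : X → X) (hf : Continuous f) (hfin : FiniteHtop f)
    (u : X → ℝ) (hu : Continuous u) (hP : PropP f u)
    (μ : Measure X) [IsProbabilityMeasure μ] (herg : Ergodic f μ)
    (hpos : 0 < ∫ x, u x ∂μ) :
    dimuMeas f u μ = ((kolSinai f μ / ∫ x, u x ∂μ : ℝ) : EReal) := by
  refine le_antisymm (EReal.le_of_forall_lt_iff_le.1 fun s hs => ?_)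
    (le_dimuMeas hf herg hu hpos)
  exact dimuMeas_le hf herg hfin hu hpos (EReal.coe_lt_coe_iff.1 hs)

end Multifractal
end
end

section
/- The thermodynamically predicted spectrum satisfies S(α) ≥ 0 for every α ∈ I, where I = {α ∈ ℝ : S(α) > −∞}. -/
/-!
If `S(α) < 0`, then some `q` and some `t < 0` satisfy `P(g) ≤ 0` for `g = q(φ - αψ) - tu`.
For `c ≥ 1` one has `P(c g) ≤ 0` as well (`pressure_const_mul_nonpos`): a cover whose weighted
sum for `(s, g)` is at most `1` has all its terms at most `1`, so its weighted sum for
`(c s, c g)` is no larger. Since `c g` is the potential with parameters `(c q, c t)`, it follows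
that `S(α) ≤ T_α(c q) ≤ c t`, and letting `c → ∞` gives `S(α) = -∞`.
-/

open MeasureTheory Filter Set Topology
open scoped ENNReal

noncomputable section

namespace Multifractal

variable {X : Type*} [MetricSpace X]

/-- The terms of a cover sum that is at most `1` are at most `1`, so raising each of them to a
power `c ≥ 1` does not increase the sum. -/
lemma coverSum_const_mul_le {Y : Type*} (E : Set (Y × ℕ)) (w : Y × ℕ → ℝ) {c : ℝ} (hc : 1 ≤ c)
    (h : coverSum E w ≤ 1) : coverSum E (fun p => c * w p) ≤ coverSum E w := by
  unfold coverSum at *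
  refine ENNReal.tsum_le_tsum fun p => ENNReal.ofReal_le_ofReal (Real.exp_le_exp.2 ?_)
  have h1 : ENNReal.ofReal (Real.exp (w p)) ≤ 1 := (ENNReal.le_tsum p).trans h
  have hw : w p ≤ 0 := Real.exp_le_one_iff.1 (ENNReal.ofReal_le_one.1 h1)
  nlinarith

lemma mP_const_mul_eq_zero {Y : Type*} [MetricSpace Y] (f : Y → Y) (Z : Set Y) (s : ℝ)
    (g : Y → ℝ) (δ : ℝ) {c : ℝ} (hc : 1 ≤ c) (h : mP f Z s g δ = 0) :
    mP f Z (c * s) (fun x => c * g x) δ = 0 := by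
  unfold mP at *
  rw [ENNReal.iSup_eq_zero] at h ⊢
  intro N
  refine le_antisymm (le_of_forall_gt fun ε hε => ?_) zero_le
  have hlt : (⨅ (E : Set (Y × ℕ)) (_ : IsBowenCover f Z N δ E),
      coverSum E fun p => -(p.2 : ℝ) * s + birk f g p.2 p.1) < min ε 1 := by
    rw [h N]; exact lt_min hε one_pos
  simp only [iInf_lt_iff] at hlt
  obtain ⟨E, hE, hsum⟩ := hlt
  refine (iInf₂_le E hE).trans_lt (lt_of_le_of_lt ?_ (hsum.trans_le (min_le_left _ _)))
  refine le_trans (le_of_eq ?_)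
    (coverSum_const_mul_le E _ hc (hsum.le.trans (min_le_right _ _)))
  congr 1
  funext p
  simp only [birk, ← Finset.mul_sum]
  ring

/-- A consequence of `P(c g) ≤ c P(g)` for `c ≥ 1`. -/
lemma pressure_const_mul_nonpos {Y : Type*} [MetricSpace Y] (f : Y → Y) (Z : Set Y)
    (g : Y → ℝ) {c : ℝ} (hc : 1 ≤ c) (h : pressure f Z g ≤ 0) :
    pressure f Z (fun x => c * g x) ≤ 0 := by
  unfold pressure at *
  refine iSup₂_le fun δ hδ => ?_
  have h0 : pressureAt f Z g δ ≤ 0 := (iSup₂_le_iff.1 h) δ hδ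
  have hc0 : 0 < c := by linarith
  refine EReal.le_of_forall_lt_iff_le.1 fun ε hε => ?_
  have hε' : 0 < ε := by exact_mod_cast hε
  have hlt : pressureAt f Z g δ < ((ε / c : ℝ) : EReal) :=
    h0.trans_lt (by exact_mod_cast div_pos hε' hc0)
  obtain ⟨_, ⟨s, hs, rfl⟩, hsε⟩ := sInf_lt_iff.1 hlt
  have hsε' : s < ε / c := EReal.coe_lt_coe_iff.1 hsε
  have hmem : pressureAt f Z (fun x => c * g x) δ ≤ ((c * s : ℝ) : EReal) :=
    sInf_le ⟨c * s, mP_const_mul_eq_zero f Z s g δ hc hs, rfl⟩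
  refine hmem.trans ?_
  have : c * s < ε := by rwa [lt_div_iff₀ hc0, mul_comm] at hsε'
  exact_mod_cast this.le

/-- Proposition: `S(α) ≥ 0` on `I`.
The thermodynamically predicted spectrum satisfies `S(α) ≥ 0` for every `α ∈ I`,
where `I = {α ∈ ℝ | S(α) > -∞}`. -/
theorem Sspec_nonneg_on_I {X : Type*} [MetricSpace X] [CompactSpace X]
    (f : X → X) (hf : Continuous f) (hfin : FiniteHtop f)
    (φ ψ u : X → ℝ) (hφ : Continuous φ) (hψ : Continuous ψ) (hu : Continuous u)
    (hP : PropP f u) :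
    ∀ α : ℝ, Sspec f φ ψ u α ≠ ⊥ → 0 ≤ Sspec f φ ψ u α := by
  intro α hne
  by_contra! hlt
  apply hne
  obtain ⟨q, hq⟩ := iInf_lt_iff.1 hlt
  obtain ⟨_, ⟨t, ht, rfl⟩, ht0⟩ := sInf_lt_iff.1 hq
  have ht0' : t < 0 := EReal.coe_lt_coe_iff.1 ht0
  have key : ∀ c : ℝ, 1 ≤ c → Sspec f φ ψ u α ≤ ((c * t : ℝ) : EReal) := by
    intro c hc
    refine (iInf_le _ (c * q)).trans (sInf_le ⟨c * t, ?_, rfl⟩)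
    have hpot : potential φ ψ u α (c * q) (c * t) =
        fun x => c * potential φ ψ u α q t x := by
      funext x; simp only [potential]; ring
    change pressure f univ (potential φ ψ u α (c * q) (c * t)) ≤ 0
    rw [hpot]
    exact pressure_const_mul_nonpos f univ _ hc ht
  refine EReal.eq_bot_iff_forall_lt _ |>.2 fun y => ?_
  -- `c * t ≤ (y - 1) / t * t = y - 1 < y`, as `t < 0`
  refine (key (max 1 ((y - 1) / t)) (le_max_left _ _)).trans_lt ?_
  have h1 : max 1 ((y - 1) / t) * t ≤ (y - 1) / t * t :=
    mul_le_mul_of_nonpos_right (le_max_right _ _) ht0'.le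
  rw [div_mul_cancel₀ _ ht0'.ne] at h1
  exact_mod_cast (by linarith : max 1 ((y - 1) / t) * t < y)
end Multifractal
end
end

section
/- Fix φ, ψ, u ∈ C(X) with u satisfying property (P). Then F̂(α) ≤ S(α) for all α ∈ ℝ; in particular, the set K̂_α is empty for every α ∉ I. -/
/-!
The upper bound holds one pair `(q, t)` at a time. Let `P(q(φ - αψ) - tu) ≤ 0` and `ε > 0`. At a
point `x` of `K̂_α` the sum `S_n(φ - αψ)(x)` is `o(n)`, because `S_nψ(x)` is positive and at most
`O(n)`, whereas `S_n u(x)` grows linearly. Hence the weight `-(t + ε) S_n u(x)` defining the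
`u`-dimension lies eventually below `S_n(q(φ - αψ) - tu)(x) - cn` for some `c > 0` depending on `x`
(`point_estimate`). Splitting `K̂_α` into countably many pieces on which `c` and the starting time
are uniform, a cover of `X` that is cheap for the pressure is recentred on each piece (the change in
the Birkhoff sums is absorbed by `cn`) and becomes a cheap cover for the `u`-dimension
(`mU_eq_zero_of_uniform`); countable subadditivity (`mU_iUnion_eq_zero`) reassembles the pieces.
Thus `dim_u K̂_α ≤ t + ε`.

Emptiness when `S(α) = -∞` follows since a set containing a point with `liminf S_n u(x) / n > 0` has
nonnegative `u`-dimension (`dimu_nonneg`): any Bowen ball of small radius and large order containing that point has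
a centre with nonnegative `S_n u`, so for `s < 0` covers of large order have weight at least `1`.
-/

open MeasureTheory Filter Set Topology
open scoped ENNReal

noncomputable section

namespace Multifractal

variable {X : Type*} [MetricSpace X]

/-! ### Birkhoff sums -/

/-- Bounded distortion: Birkhoff sums of a continuous function vary by at most `nη` on Bowen balls
of small radius and order `n`. -/
lemma exists_distortion [CompactSpace X] (f : X → X) {v : X → ℝ} (hv : Continuous v) {η : ℝ}
    (hη : 0 < η) :
    ∃ δ > 0, ∀ (x y : X) (n : ℕ), y ∈ bowenBall f x n δ →
      |birk f v n x - birk f v n y| ≤ n * η := by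
  obtain ⟨δ, hδ, h⟩ := Metric.uniformContinuous_iff.1
    (CompactSpace.uniformContinuous_of_continuous hv) η hη
  refine ⟨δ, hδ, fun x y n hy => ?_⟩
  unfold birk
  rw [← Finset.sum_sub_distrib]
  refine (Finset.abs_sum_le_sum_abs _ _).trans ?_
  refine (Finset.sum_le_card_nsmul _ _ η fun k hk => ?_).trans (by simp)
  have := h (hy k (Finset.mem_range.1 hk))
  rw [Real.dist_eq] at this
  exact this.le

lemma birk_potential (f : X → X) (φ ψ u : X → ℝ) (α q t : ℝ) (n : ℕ) (x : X) :
    birk f (potential φ ψ u α q t) n x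
      = q * (birk f φ n x - α * birk f ψ n x) - t * birk f u n x := by
  simp only [birk, potential, Finset.sum_sub_distrib, Finset.mul_sum, mul_sub]

lemma birk_le (f : X → X) {v : X → ℝ} {M : ℝ} (hM : ∀ x, v x ≤ M) (n : ℕ) (x : X) :
    birk f v n x ≤ n * M :=
  (Finset.sum_le_card_nsmul _ _ M fun _ _ => hM _).trans (by simp)

/-! ### Vanishing of cover sums -/

lemma iSup_iInf_cover_eq_zero_iff (f : X → X) (Z : Set X) (δ : ℝ) (w : X × ℕ → ℝ) :
    (⨆ N : ℕ, ⨅ (E : Set (X × ℕ)) (_ : IsBowenCover f Z N δ E), coverSum E w) = 0 ↔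
      ∀ N : ℕ, ∀ ε : ℝ≥0∞, 0 < ε → ∃ E, IsBowenCover f Z N δ E ∧ coverSum E w < ε := by
  rw [ENNReal.iSup_eq_zero]
  refine forall_congr' fun N => ⟨fun h ε hε => ?_, fun h => ?_⟩
  · rw [← h] at hε
    simpa only [iInf_lt_iff, exists_prop] using hε
  · refine le_antisymm (le_of_forall_gt fun ε hε => ?_) bot_le
    simpa only [iInf_lt_iff, exists_prop] using h ε hε

/-- Centres of a cover of a piece lie in that piece, hence in the union, so covers of the pieces
can be put together. -/
lemma mU_iUnion_eq_zero {ι : Type*} [Countable ι] (f : X → X) (u : X → ℝ) (Y : ι → Set X)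
    {s δ : ℝ} (h : ∀ i, mU f u (Y i) s δ = 0) : mU f u (⋃ i, Y i) s δ = 0 := by
  unfold mU at h ⊢
  simp only [iSup_iInf_cover_eq_zero_iff] at h ⊢
  intro N ε hε
  obtain ⟨ε', hε', hsum⟩ := ENNReal.exists_pos_sum_of_countable' hε.ne' ι
  choose E hE hEs using fun i => h i N (ε' i) (hε' i)
  refine ⟨⋃ i, E i, ⟨countable_iUnion fun i => (hE i).1, ?_, ?_⟩, ?_⟩
  · intro p hp
    obtain ⟨i, hi⟩ := mem_iUnion.1 hp
    exact ⟨mem_iUnion.2 ⟨i, ((hE i).2.1 p hi).1⟩, ((hE i).2.1 p hi).2⟩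
  · refine iUnion_subset fun i => (hE i).2.2.trans ?_
    exact biUnion_mono (subset_iUnion E i) fun _ _ => le_rfl
  · refine lt_of_le_of_lt ?_ hsum
    refine (ENNReal.tsum_iUnion_le_tsum
      (fun p : X × ℕ => ENNReal.ofReal (Real.exp (-s * birk f u p.2 p.1))) E).trans ?_
    exact ENNReal.tsum_le_tsum fun i => (hEs i).le

/-- If the pressure of `g` is at most `0`, then on a set where the `u`-weight is below the
`g`-weight by a uniform linear amount, `m_u` vanishes: covers of `X` that are cheap for `g` are
recentred on the set. -/
lemma mU_eq_zero_of_uniform [CompactSpace X] (f : X → X) (u : X → ℝ) {g : X → ℝ}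
    (hg : Continuous g) (hp : pressure f univ g ≤ 0) (Y : Set X) {s c : ℝ} (hc : 0 < c) (k : ℕ)
    (hY : ∀ x ∈ Y, ∀ n ≥ k, -s * birk f u n x ≤ birk f g n x - n * c) {δ : ℝ} (hδ : 0 < δ) :
    mU f u Y s δ = 0 := by
  obtain ⟨δ₀, hδ₀, hdist⟩ := exists_distortion f hg (half_pos hc)
  set δ₁ := min δ₀ (δ / 2) with hδ₁
  have hδ₁pos : 0 < δ₁ := lt_min hδ₀ (half_pos hδ)
  have hpa : pressureAt f univ g δ₁ < ((c / 2 : ℝ) : EReal) := by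
    refine lt_of_le_of_lt ((le_iSup₂ (f := fun δ (_ : 0 < δ) => pressureAt f univ g δ)
      δ₁ hδ₁pos).trans hp) ?_
    exact_mod_cast half_pos hc
  obtain ⟨_, ⟨s₀, hs₀, rfl⟩, hlt⟩ := sInf_lt_iff.1 hpa
  have hs₀c : s₀ < c / 2 := EReal.coe_lt_coe_iff.1 hlt
  simp only [mem_ofPred_eq, mP, iSup_iInf_cover_eq_zero_iff] at hs₀
  unfold mU
  rw [iSup_iInf_cover_eq_zero_iff]
  intro N ε hε
  obtain ⟨E, ⟨hEc, hEN, hEcov⟩, hEs⟩ := hs₀ (max N k) ε hε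
  let E₁ : Set (X × ℕ) := {p | p ∈ E ∧ (bowenBall f p.1 p.2 δ₁ ∩ Y).Nonempty}
  choose z hz using fun p : E₁ => p.2.2
  -- the recentred cover is the range of `r`
  let r : E₁ → X × ℕ := fun p => (z p, p.1.2)
  have hE₁ : E₁.Countable := hEc.mono fun p hp => hp.1
  have := hE₁.to_subtype
  refine ⟨range r, ⟨countable_range r, ?_, ?_⟩, ?_⟩
  · rintro _ ⟨p, rfl⟩
    exact ⟨(hz p).2, (le_max_left _ _).trans (hEN p.1 p.2.1).2⟩
  · intro y hy
    obtain ⟨p, hpE, hyp⟩ := mem_iUnion₂.1 (hEcov (mem_univ y))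
    let p' : E₁ := ⟨p, hpE, y, hyp, hy⟩
    refine mem_iUnion₂.2 ⟨r p', mem_range_self _, fun j hj => ?_⟩
    have h₁ := hyp j hj
    have h₂ := (hz p').1 j hj
    have h₃ : δ₁ ≤ δ / 2 := min_le_right _ _
    change dist (f^[j] (z p')) (f^[j] y) < δ
    have h₄ := dist_triangle_left (f^[j] (z p')) (f^[j] y) (f^[j] p.1)
    change dist (f^[j] p.1) (f^[j] (z p')) < δ₁ at h₂
    linarith
  · refine lt_of_le_of_lt ?_ hEs
    unfold coverSum
    -- distinct balls may acquire the same centre, which only lowers the sum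
    refine (ENNReal.tsum_le_tsum_comp_of_surjective
      (f := rangeFactorization r) rangeFactorization_surjective _).trans ?_
    refine le_trans (ENNReal.tsum_le_tsum fun p => ?_)
      (ENNReal.tsum_mono_subtype (fun p : X × ℕ =>
        ENNReal.ofReal (Real.exp (-(p.2 : ℝ) * s₀ + birk f g p.2 p.1)))
        (fun p (hp : p ∈ E₁) => hp.1))
    refine ENNReal.ofReal_le_ofReal (Real.exp_le_exp.2 ?_)
    change -s * birk f u p.1.2 (z p) ≤ -(p.1.2 : ℝ) * s₀ + birk f g p.1.2 p.1.1
    have h₁ := hY (z p) (hz p).2 p.1.2 ((le_max_right _ _).trans (hEN p.1 p.2.1).2)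
    have h₂ := hdist p.1.1 (z p) p.1.2
      fun j hj => ((hz p).1 j hj).trans_le (min_le_left _ _)
    have h₃ := (abs_le.1 h₂).1
    have h₄ : (p.1.2 : ℝ) * s₀ ≤ p.1.2 * (c / 2) := by gcongr
    linarith

/-- Pointwise version of `mU_eq_zero_of_uniform`: the linear gain and the time from which it holds
may depend on the point. -/
lemma dimu_le_of_pointwise [CompactSpace X] (f : X → X) (u : X → ℝ) {g : X → ℝ}
    (hg : Continuous g) (hp : pressure f univ g ≤ 0) (Z : Set X) {s : ℝ}
    (hZ : ∀ x ∈ Z, ∃ c > 0, ∀ᶠ n : ℕ in atTop,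
      -s * birk f u n x ≤ birk f g n x - n * c) :
    dimu f u Z ≤ s := by
  let Y : ℕ × ℕ → Set X := fun i =>
    {x ∈ Z | ∀ n ≥ i.2, -s * birk f u n x ≤ birk f g n x - n * (1 / ((i.1 : ℝ) + 1))}
  have hYZ : Z = ⋃ i, Y i := by
    refine Subset.antisymm (fun x hx => ?_) (iUnion_subset fun i x hx => hx.1)
    obtain ⟨c, hc, h⟩ := hZ x hx
    obtain ⟨k, hk⟩ := eventually_atTop.1 h
    obtain ⟨m, hm⟩ := exists_nat_one_div_lt hc
    refine mem_iUnion.2 ⟨(m, k), hx, fun n hn => (hk n hn).trans ?_⟩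
    change _ - (n : ℝ) * c ≤ _ - (n : ℝ) * (1 / ((m : ℝ) + 1))
    gcongr
  refine iSup₂_le fun δ hδ => sInf_le ⟨s, ?_, rfl⟩
  change mU f u Z s δ = 0
  rw [hYZ]
  exact mU_iUnion_eq_zero f u Y fun i => mU_eq_zero_of_uniform f u hg hp (Y i)
    Nat.one_div_pos_of_nat i.2 (fun x hx => hx.2) hδ

/-! ### Points of the level set -/

lemma exists_linear_growth {f : X → X} {u : X → ℝ} {x : X}
    (h : 0 < Filter.liminf (fun n : ℕ => ((birk f u n x / n : ℝ) : EReal)) atTop) :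
    ∃ c > 0, ∀ᶠ n : ℕ in atTop, n * c ≤ birk f u n x := by
  obtain ⟨c, hc₀, hc⟩ := EReal.lt_iff_exists_real_btwn.1 h
  refine ⟨c, by exact_mod_cast hc₀, ?_⟩
  filter_upwards [eventually_lt_of_lt_liminf hc, eventually_gt_atTop 0] with n hn hn₀
  have hn' : (0 : ℝ) < n := by exact_mod_cast hn₀
  have : c < birk f u n x / n := by exact_mod_cast hn
  rw [lt_div_iff₀ hn'] at this
  linarith

/-- On `K̂_α` the term `q S_n(φ - αψ)` is eventually a small multiple of `S_n u`, so raising `t` to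
`t + ε` yields a linear gain. -/
lemma point_estimate [CompactSpace X] (f : X → X) (φ u : X → ℝ) {ψ : X → ℝ} (hψ : Continuous ψ)
    (α q t : ℝ) {ε : ℝ} (hε : 0 < ε) {x : X} (hx : x ∈ Kratio f φ ψ α ∩ Xhat f ψ u) :
    ∃ c > 0, ∀ᶠ n : ℕ in atTop,
      -(t + ε) * birk f u n x ≤ birk f (potential φ ψ u α q t) n x - n * c := by
  obtain ⟨hK, hψx, hux⟩ := hx
  obtain ⟨c, hc, hcu⟩ := exists_linear_growth hux
  obtain ⟨M₀, hM₀⟩ := (isCompact_range hψ).bddAbove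
  set M := max M₀ 1 with hM
  have hM1 : 0 < M := lt_max_of_lt_right one_pos
  have hψM : ∀ y, ψ y ≤ M := fun y => (hM₀ (mem_range_self y)).trans (le_max_left _ _)
  set η := ε * c / (2 * (|q| + 1) * M) with hη
  have hηpos : 0 < η := by positivity
  have hηM : (|q| + 1) * (η * M) = ε * c / 2 := by
    rw [hη]; field_simp
  refine ⟨ε * c / 2, by positivity, ?_⟩
  filter_upwards [hcu, eventually_lt_of_lt_liminf hψx,
    (Metric.tendsto_nhds.1 hK) η hηpos] with n h₁ h₂ h₃
  have h₂' : 0 < birk f ψ n x := by exact_mod_cast h₂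
  rw [Real.dist_eq] at h₃
  have h₄ : |birk f φ n x - α * birk f ψ n x| ≤ n * (η * M) := by
    have e : birk f φ n x - α * birk f ψ n x
        = (birk f φ n x / birk f ψ n x - α) * birk f ψ n x := by
      field_simp
    rw [e, abs_mul, abs_of_pos h₂']
    calc _ ≤ η * (n * M) := by gcongr; exact birk_le f hψM n x
      _ = n * (η * M) := by ring
  have h₅ : -(q * (birk f φ n x - α * birk f ψ n x)) ≤ n * (ε * c / 2) := by
    calc _ ≤ |q * (birk f φ n x - α * birk f ψ n x)| := neg_le_abs _
      _ ≤ (|q| + 1) * (n * (η * M)) := by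
        rw [abs_mul]
        gcongr
        linarith
      _ = n * (ε * c / 2) := by rw [← hηM]; ring
  have h₆ : ε * (n * c) ≤ ε * birk f u n x := by gcongr
  rw [birk_potential]
  linarith

/-! ### Bounds on the dimension -/

/-- A set containing a point with linear growth of `S_n u` has nonnegative `u`-dimension. -/
lemma dimu_nonneg [CompactSpace X] (f : X → X) {u : X → ℝ} (hu : Continuous u) {Z : Set X} {x : X}
    (hxZ : x ∈ Z)
    (hx : 0 < Filter.liminf (fun n : ℕ => ((birk f u n x / n : ℝ) : EReal)) atTop) :
    0 ≤ dimu f u Z := by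
  obtain ⟨c, hc, hcu⟩ := exists_linear_growth hx
  obtain ⟨δ, hδ, hdist⟩ := exists_distortion f hu hc
  obtain ⟨N, hN⟩ := eventually_atTop.1 hcu
  refine le_trans ?_ (le_iSup₂ (f := fun δ (_ : 0 < δ) => dimuAt f u Z δ) δ hδ)
  refine le_sInf ?_
  rintro _ ⟨s, hs, rfl⟩
  change (0 : EReal) ≤ (s : EReal)
  by_contra! hneg
  have hs₀ : s < 0 := by exact_mod_cast hneg
  simp only [mem_ofPred_eq, mU, iSup_iInf_cover_eq_zero_iff] at hs
  obtain ⟨E, ⟨-, hEN, hcov⟩, hE⟩ := hs N 1 one_pos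
  obtain ⟨p, hpE, hxp⟩ := mem_iUnion₂.1 (hcov hxZ)
  refine absurd hE (not_lt.2 ?_)
  refine le_trans ?_ (ENNReal.le_tsum (⟨p, hpE⟩ : E))
  have h₁ := hN p.2 (hEN p hpE).2
  have h₂ := (abs_le.1 (hdist p.1 x p.2 hxp)).1
  rw [ENNReal.one_le_ofReal, Real.one_le_exp_iff]
  exact mul_nonneg (by linarith) (by linarith)

lemma dimu_le_Sspec [CompactSpace X] (f : X → X) {φ ψ u : X → ℝ} (hφ : Continuous φ)
    (hψ : Continuous ψ) (hu : Continuous u) (α : ℝ) :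
    dimu f u (Kratio f φ ψ α ∩ Xhat f ψ u) ≤ Sspec f φ ψ u α := by
  refine le_iInf fun q => le_sInf ?_
  rintro _ ⟨t, ht, rfl⟩
  have hg : Continuous (potential φ ψ u α q t) := by unfold potential; fun_prop
  refine EReal.le_of_forall_lt_iff_le.1 fun z hz => ?_
  have hz' : t < z := EReal.coe_lt_coe_iff.1 hz
  have := dimu_le_of_pointwise f u hg ht (Kratio f φ ψ α ∩ Xhat f ψ u) (s := t + (z - t))
    fun x hx => point_estimate f φ u hψ α q t (sub_pos.2 hz') hx
  rwa [add_sub_cancel] at this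

/-- Theorem A: upper bound `F̂(α) ≤ S(α)`.
Fix `φ, ψ, u ∈ C(X)` such that `u` satisfies property (P).  Then `F̂(α) ≤ S(α)` for all
`α ∈ ℝ`; in particular, `K̂_α = ∅` for all `α ∉ I`. -/
theorem Fhat_le_Sspec {X : Type*} [MetricSpace X] [CompactSpace X]
    (f : X → X) (hf : Continuous f) (hfin : FiniteHtop f)
    (φ ψ u : X → ℝ) (hφ : Continuous φ) (hψ : Continuous ψ) (hu : Continuous u)
    (hP : PropP f u) :
    (∀ α : ℝ, dimu f u (Kratio f φ ψ α ∩ Xhat f ψ u) ≤ Sspec f φ ψ u α) ∧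
    (∀ α : ℝ, Sspec f φ ψ u α = ⊥ → Kratio f φ ψ α ∩ Xhat f ψ u = ∅) := by
  refine ⟨fun α => dimu_le_Sspec f hφ hψ hu α, fun α hα => ?_⟩
  by_contra hne
  obtain ⟨x, hx⟩ := nonempty_iff_ne_empty.2 hne
  have h := (dimu_nonneg f hu hx hx.2.2).trans (dimu_le_Sspec f hφ hψ hu α)
  rw [hα] at h
  exact absurd h (by simp)

end Multifractal
end
end
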